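/- arXiv:0901.0391 — 4 statements merged into one kernel-verified Lean document; each statement's English description precedes it below -/
import Mathlib

section
/- Let W be the Coxeter group of type Bₙ (n ≥ 2) with simple generators s₁, …, sₙ, Coxeter matrix m(i,i+1) = 3 for 1 ≤ i ≤ n−2, m(n−1,n) = 4, and m(i,j) = 2 for all other pairs i ≠ j, and length function ℓ. Then the set of elements w ∈ W having no right descent in {2, 3, …, n} is exactly the set of 2n elements {1, s₁, s₂s₁, s₃s₂s₁, …, sₙsₙ₋₁⋯s₁, sₙ₋₁sₙsₙ₋₁⋯s₁, sₙ₋₂sₙ₋₁sₙsₙ₋₁⋯s₁, …, s₁s₂⋯sₙ₋₁sₙsₙ₋₁⋯s₁}, and these 2n elements are pairwise distinct. Moreover, for 1 ≤ j ≤ n the set of left descents of sⱼsⱼ₋₁⋯s₁ is exactly {j}, and for 1 ≤ j ≤ n−1 the set of left descents of sⱼsⱼ₊₁⋯sₙ₋₁sₙsₙ₋₁⋯s₁ is exactly {j}. -/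
/-- The element `s_j * s_{j-1} * ⋯ * s_1` of a Coxeter group whose simple
generators are indexed by `Fin n`, where the generator `sᵢ` (for `1 ≤ i ≤ n`)
is `cs.simple ⟨i - 1, _⟩`.  For `j = 0` this is the identity. -/
def descendingWord {n : ℕ} {W : Type*} [Group W] {M : CoxeterMatrix (Fin n)}
    (cs : CoxeterSystem M W) : ℕ → W
  | 0 => 1
  | j + 1 => (if h : j < n then cs.simple ⟨j, h⟩ else 1) * descendingWord cs j

/-- The element `s_{n-m} * s_{n-m+1} * ⋯ * s_{n-1} * s_n * s_{n-1} * ⋯ * s_1`: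
`hookWord cs 0 = sₙsₙ₋₁⋯s₁` and `hookWord cs (m+1) = s_{n-m-1} * hookWord cs m`,
where the generator `sᵢ` (`1 ≤ i ≤ n`) is `cs.simple ⟨i - 1, _⟩`. -/
def hookWord {n : ℕ} {W : Type*} [Group W] {M : CoxeterMatrix (Fin n)}
    (cs : CoxeterSystem M W) : ℕ → W
  | 0 => descendingWord cs n
  | m + 1 => (if h : n - 2 - m < n then cs.simple ⟨n - 2 - m, h⟩ else 1) * hookWord cs m

namespace TypeB

/-- The action of the `i`-th simple reflection (counted from `0`) of type `Bₙ` on the chain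
`0, 1, …, 2n - 1`: it exchanges `i` with `i + 1` and `2n - 2 - i` with `2n - 1 - i`. -/
def chainSwap (n i : ℕ) : Function.End ℕ := fun k ↦
  if k = i then i + 1 else if k = i + 1 then i
  else if k + i + 2 = 2 * n then k + 1 else if k + i + 1 = 2 * n then k - 1 else k

lemma chainSwap_apply (n i k : ℕ) : chainSwap n i k =
    if k = i then i + 1 else if k = i + 1 then i
    else if k + i + 2 = 2 * n then k + 1 else if k + i + 1 = 2 * n then k - 1 else k := rfl

lemma chainSwap_mul_self {n i : ℕ} (hi : i < n) : chainSwap n i * chainSwap n i = 1 := by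
  funext k
  change chainSwap n i (chainSwap n i k) = k
  grind (splits := 40) [chainSwap_apply]

lemma chainSwap_comm {n i j : ℕ} (hij : i + 1 < j) (hj : j < n) :
    chainSwap n i * chainSwap n j = chainSwap n j * chainSwap n i := by
  funext k
  change chainSwap n i (chainSwap n j k) = chainSwap n j (chainSwap n i k)
  grind (splits := 40) [chainSwap_apply]

lemma chainSwap_braid {n i : ℕ} (hi : i + 2 < n) :
    chainSwap n i * chainSwap n (i + 1) * chainSwap n i =
      chainSwap n (i + 1) * chainSwap n i * chainSwap n (i + 1) := by
  funext k
  change chainSwap n i (chainSwap n (i + 1) (chainSwap n i k)) =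
    chainSwap n (i + 1) (chainSwap n i (chainSwap n (i + 1) k))
  grind (splits := 40) [chainSwap_apply]

lemma chainSwap_braid_four {n i : ℕ} (hi : i + 2 = n) :
    chainSwap n i * chainSwap n (i + 1) * chainSwap n i * chainSwap n (i + 1) =
      chainSwap n (i + 1) * chainSwap n i * chainSwap n (i + 1) * chainSwap n i := by
  funext k
  change chainSwap n i (chainSwap n (i + 1) (chainSwap n i (chainSwap n (i + 1) k))) =
    chainSwap n (i + 1) (chainSwap n i (chainSwap n (i + 1) (chainSwap n i k)))
  grind (splits := 40) [chainSwap_apply]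

section Involutions

variable {G : Type*} [Monoid G] {a b : G}

lemma mul_pow_two_eq_one (ha : a * a = 1) (hb : b * b = 1) (h : a * b = b * a) :
    (a * b) ^ 2 = 1 := by
  rw [Commute.mul_pow h, pow_two, pow_two, ha, hb, one_mul]

lemma mul_pow_three_eq_one (ha : a * a = 1) (hb : b * b = 1) (h : a * b * a = b * a * b) :
    (a * b) ^ 3 = 1 := by
  calc (a * b) ^ 3 = (a * b * a) * (b * a * b) := by
        simp only [pow_succ, pow_zero, one_mul, mul_assoc]
    _ = a * b * (a * a) * b * a := by rw [← h]; simp only [mul_assoc]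
    _ = 1 := by rw [ha, mul_one, mul_assoc a b b, hb, mul_one, ha]

lemma mul_pow_four_eq_one (ha : a * a = 1) (hb : b * b = 1)
    (h : a * b * a * b = b * a * b * a) : (a * b) ^ 4 = 1 := by
  calc (a * b) ^ 4 = (a * b * a * b) * (a * b * a * b) := by
        simp only [pow_succ, pow_zero, one_mul, mul_assoc]
    _ = a * (b * (a * (b * b) * a) * b) * a := by nth_rw 2 [h]; simp only [mul_assoc]
    _ = 1 := by simp [ha, hb]

end Involutions

section Group

variable {G : Type*} [Group G] {a b : G}

lemma comm_of_mul_pow_two (ha : a * a = 1) (hb : b * b = 1) (h : (a * b) ^ 2 = 1) :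
    a * b = b * a := by
  have h' : (a * b)⁻¹ = a * b := inv_eq_of_mul_eq_one_left (by rw [← pow_two, h])
  rw [← h', mul_inv_rev, inv_eq_of_mul_eq_one_left ha, inv_eq_of_mul_eq_one_left hb]

lemma braid_of_mul_pow_three (ha : a * a = 1) (hb : b * b = 1) (h : (a * b) ^ 3 = 1) :
    a * b * a = b * a * b := by
  have h' : (b * a * b)⁻¹ = a * b * a := by
    refine inv_eq_of_mul_eq_one_left ?_
    rw [← h]
    simp only [pow_succ, pow_zero, one_mul, mul_assoc]
  rw [← h', mul_inv_rev, mul_inv_rev, inv_eq_of_mul_eq_one_left ha,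
    inv_eq_of_mul_eq_one_left hb, mul_assoc]

lemma braid_of_mul_pow_four (ha : a * a = 1) (hb : b * b = 1) (h : (a * b) ^ 4 = 1) :
    a * b * a * b = b * a * b * a := by
  have h' : (a * b * a * b)⁻¹ = a * b * a * b := by
    refine inv_eq_of_mul_eq_one_left ?_
    rw [← h]
    simp only [pow_succ, pow_zero, one_mul, mul_assoc]
  rw [← h']
  simp only [mul_inv_rev, inv_eq_of_mul_eq_one_left ha, inv_eq_of_mul_eq_one_left hb, mul_assoc]

end Group

/-- The Coxeter matrix of type `Bₙ`, with nodes counted from `0`. -/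
def IsTypeB {n : ℕ} (M : CoxeterMatrix (Fin n)) : Prop :=
  ∀ i j : Fin n, i ≠ j →
    M i j = if (i : ℕ) + 1 = (j : ℕ) ∨ (j : ℕ) + 1 = (i : ℕ) then
      (if (i : ℕ) = n - 1 ∨ (j : ℕ) = n - 1 then 4 else 3) else 2

variable {n : ℕ} {W : Type*} [Group W] {M : CoxeterMatrix (Fin n)}

lemma chainSwap_isLiftable (hM : IsTypeB M) :
    M.IsLiftable fun i : Fin n ↦ chainSwap n i := by
  have key : ∀ i j : Fin n, (i : ℕ) < j →
      (chainSwap n i * chainSwap n j) ^ M i j = 1 ∧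
        (chainSwap n j * chainSwap n i) ^ M i j = 1 := by
    intro i j hij
    have hi := chainSwap_mul_self i.isLt
    have hj := chainSwap_mul_self j.isLt
    rw [hM i j (by rintro rfl; exact hij.false)]
    obtain h | h := eq_or_ne ((i : ℕ) + 1) j
    · rw [if_pos (Or.inl h)]
      rw [← h] at hj ⊢
      split_ifs with h4
      · have hb := chainSwap_braid_four (n := n) (i := i) (by omega)
        exact ⟨mul_pow_four_eq_one hi hj hb, mul_pow_four_eq_one hj hi hb.symm⟩
      · have hb := chainSwap_braid (n := n) (i := i) (by omega)
        exact ⟨mul_pow_three_eq_one hi hj hb, mul_pow_three_eq_one hj hi hb.symm⟩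
    · rw [if_neg (by omega)]
      have hb := chainSwap_comm (n := n) (i := i) (j := j) (by omega) j.isLt
      exact ⟨mul_pow_two_eq_one hi hj hb, mul_pow_two_eq_one hj hi hb.symm⟩
  intro i j
  obtain h | h | h := lt_trichotomy (i : ℕ) j
  · exact (key i j h).1
  · obtain rfl := Fin.ext h
    rw [M.diagonal, pow_one]
    exact chainSwap_mul_self i.isLt
  · rw [M.symmetric]
    exact (key j i h).2

/-- The action of the Coxeter group of type `Bₙ` on the chain of minimal coset representatives. -/
noncomputable def chainAction (cs : CoxeterSystem M W) (hM : IsTypeB M) : W →* Function.End ℕ :=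
  cs.lift ⟨fun i : Fin n ↦ chainSwap n i, chainSwap_isLiftable hM⟩

/-- The `i`-th simple generator, counted from `0`, and `1` when `i` is out of range. -/
noncomputable def simpleNat (cs : CoxeterSystem M W) (i : ℕ) : W :=
  if h : i < n then cs.simple ⟨i, h⟩ else 1

/-- The chain `1, s₁, s₂s₁, …, sₙ⋯s₁, sₙ₋₁sₙ⋯s₁, …, s₁⋯sₙ⋯s₁`. -/
noncomputable def chain (cs : CoxeterSystem M W) (k : ℕ) : W :=
  if k ≤ n then descendingWord cs k else hookWord cs (k - n)

variable (cs : CoxeterSystem M W)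

lemma simpleNat_of_lt {i : ℕ} (h : i < n) : simpleNat cs i = cs.simple ⟨i, h⟩ := dif_pos h

lemma simpleNat_mul_self (i : ℕ) : simpleNat cs i * simpleNat cs i = 1 := by
  unfold simpleNat
  split_ifs <;> simp

lemma simpleNat_mul_cancel_left (i : ℕ) (w : W) :
    simpleNat cs i * (simpleNat cs i * w) = w := by
  rw [← mul_assoc, simpleNat_mul_self, one_mul]

lemma descendingWord_succ (j : ℕ) :
    descendingWord cs (j + 1) = simpleNat cs j * descendingWord cs j := rfl

lemma hookWord_succ (m : ℕ) :
    hookWord cs (m + 1) = simpleNat cs (n - 2 - m) * hookWord cs m := rfl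

lemma simpleNat_comm (hM : IsTypeB M) {i j : ℕ} (hij : i + 1 < j) (hj : j < n) :
    simpleNat cs i * simpleNat cs j = simpleNat cs j * simpleNat cs i := by
  refine comm_of_mul_pow_two (simpleNat_mul_self cs i) (simpleNat_mul_self cs j) ?_
  rw [simpleNat_of_lt cs (show i < n by omega), simpleNat_of_lt cs hj]
  have h := hM ⟨i, by omega⟩ ⟨j, hj⟩ (by simp; omega)
  rw [if_neg (by dsimp only; omega)] at h
  rw [← h]
  exact cs.simple_mul_simple_pow _ _

lemma simpleNat_braid (hM : IsTypeB M) {i : ℕ} (hi : i + 2 < n) :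
    simpleNat cs i * simpleNat cs (i + 1) * simpleNat cs i =
      simpleNat cs (i + 1) * simpleNat cs i * simpleNat cs (i + 1) := by
  refine braid_of_mul_pow_three (simpleNat_mul_self cs _) (simpleNat_mul_self cs _) ?_
  rw [simpleNat_of_lt cs (show i < n by omega), simpleNat_of_lt cs (show i + 1 < n by omega)]
  have h := hM ⟨i, by omega⟩ ⟨i + 1, by omega⟩ (by simp)
  rw [if_pos (by dsimp only; omega), if_neg (by dsimp only; omega)] at h
  rw [← h]
  exact cs.simple_mul_simple_pow _ _

lemma simpleNat_braid_four (hM : IsTypeB M) {i : ℕ} (hi : i + 2 = n) :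
    simpleNat cs i * simpleNat cs (i + 1) * simpleNat cs i * simpleNat cs (i + 1) =
      simpleNat cs (i + 1) * simpleNat cs i * simpleNat cs (i + 1) * simpleNat cs i := by
  refine braid_of_mul_pow_four (simpleNat_mul_self cs _) (simpleNat_mul_self cs _) ?_
  rw [simpleNat_of_lt cs (show i < n by omega), simpleNat_of_lt cs (show i + 1 < n by omega)]
  have h := hM ⟨i, by omega⟩ ⟨i + 1, by omega⟩ (by simp)
  rw [if_pos (by dsimp only; omega), if_pos (by dsimp only; omega)] at h
  rw [← h]
  exact cs.simple_mul_simple_pow _ _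

lemma simpleNat_mul_descendingWord_of_lt (hM : IsTypeB M) {i k : ℕ} (hk : k < i) (hi : i < n) :
    simpleNat cs i * descendingWord cs k = descendingWord cs k * simpleNat cs i := by
  induction k with
  | zero => simp [descendingWord]
  | succ k ih =>
    rw [descendingWord_succ, ← mul_assoc, ← simpleNat_comm cs hM hk hi, mul_assoc,
      ih (by omega), mul_assoc]

lemma simpleNat_mul_descendingWord_of_gt (hM : IsTypeB M) {i k : ℕ} (hi : i + 2 ≤ k)
    (hin : i + 2 < n) (hk : k ≤ n) :
    simpleNat cs i * descendingWord cs k = descendingWord cs k * simpleNat cs (i + 1) := by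
  induction k, hi using Nat.le_induction with
  | base =>
    calc simpleNat cs i * descendingWord cs (i + 2)
        = simpleNat cs i * simpleNat cs (i + 1) * simpleNat cs i * descendingWord cs i := by
          simp only [descendingWord_succ, mul_assoc]
      _ = simpleNat cs (i + 1) * simpleNat cs i *
            (simpleNat cs (i + 1) * descendingWord cs i) := by
          rw [simpleNat_braid cs hM hin]; simp only [mul_assoc]
      _ = descendingWord cs (i + 2) * simpleNat cs (i + 1) := by
          rw [simpleNat_mul_descendingWord_of_lt cs hM (by omega) (by omega)]
          simp only [descendingWord_succ, mul_assoc]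
  | succ k hik ih =>
    rw [descendingWord_succ, ← mul_assoc, simpleNat_comm cs hM (by omega) (by omega), mul_assoc,
      ih (by omega), mul_assoc]

lemma simpleNat_mul_hookWord_of_lt (hM : IsTypeB M) {i m : ℕ} (hi : i + 2 + m < n) :
    simpleNat cs i * hookWord cs m = hookWord cs m * simpleNat cs (i + 1) := by
  induction m with
  | zero => exact simpleNat_mul_descendingWord_of_gt cs hM (by omega) (by omega) le_rfl
  | succ m ih =>
    rw [hookWord_succ, ← mul_assoc, simpleNat_comm cs hM (by omega) (by omega), mul_assoc,
      ih (by omega), mul_assoc]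

lemma simpleNat_mul_hookWord_one (hM : IsTypeB M) (hn : 2 ≤ n) :
    simpleNat cs (n - 1) * hookWord cs 1 = hookWord cs 1 * simpleNat cs (n - 1) := by
  obtain ⟨p, rfl⟩ : ∃ p, n = p + 2 := ⟨n - 2, by omega⟩
  have h1 : hookWord cs 1 =
      simpleNat cs p * simpleNat cs (p + 1) * simpleNat cs p * descendingWord cs p := by
    rw [hookWord_succ, hookWord, descendingWord_succ, descendingWord_succ]
    simp only [Nat.sub_zero, Nat.add_sub_cancel, mul_assoc]
  rw [show p + 2 - 1 = p + 1 from rfl, h1, mul_assoc _ (descendingWord cs p),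
    ← simpleNat_mul_descendingWord_of_lt cs hM (by omega) (by omega), ← mul_assoc, ← mul_assoc,
    ← mul_assoc, ← mul_assoc, simpleNat_braid_four cs hM rfl]

lemma simpleNat_mul_hookWord_add_two (hM : IsTypeB M) {m : ℕ} (hm : m + 3 ≤ n) :
    simpleNat cs (n - 2 - m) * hookWord cs (m + 2) =
      hookWord cs (m + 2) * simpleNat cs (n - 2 - m) := by
  obtain ⟨p, rfl⟩ : ∃ p, n = p + 3 + m := ⟨n - 3 - m, by omega⟩
  have h1 : hookWord cs (m + 2) = simpleNat cs p * simpleNat cs (p + 1) * hookWord cs m := by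
    rw [hookWord_succ, hookWord_succ, show p + 3 + m - 2 - (m + 1) = p by omega,
      show p + 3 + m - 2 - m = p + 1 by omega, mul_assoc]
  rw [show p + 3 + m - 2 - m = p + 1 by omega, h1, mul_assoc _ (hookWord cs m),
    ← simpleNat_mul_hookWord_of_lt cs hM (by omega), ← mul_assoc, ← mul_assoc, ← mul_assoc,
    simpleNat_braid cs hM (by omega)]

lemma simpleNat_mul_hookWord_of_gt (hM : IsTypeB M) {i m : ℕ} (hi : n ≤ i + m)
    (hin : i < n) (hm : m < n) :
    simpleNat cs i * hookWord cs m = hookWord cs m * simpleNat cs i := by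
  induction m with
  | zero => omega
  | succ m ih =>
    by_cases h : n ≤ i + m
    · rw [hookWord_succ, ← mul_assoc, ← simpleNat_comm cs hM (by omega) hin, mul_assoc,
        ih h (by omega), mul_assoc]
    · obtain rfl | ⟨m, rfl⟩ : m = 0 ∨ ∃ m', m = m' + 1 := by cases m <;> simp
      · obtain rfl : i = n - 1 := by omega
        exact simpleNat_mul_hookWord_one cs hM (by omega)
      · obtain rfl : i = n - 2 - m := by omega
        exact simpleNat_mul_hookWord_add_two cs hM (by omega)

lemma chain_of_le {k : ℕ} (hk : k ≤ n) : chain cs k = descendingWord cs k := if_pos hk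

lemma chain_add (m : ℕ) : chain cs (n + m) = hookWord cs m := by
  obtain rfl | hm := Nat.eq_zero_or_pos m
  · exact chain_of_le cs le_rfl
  · rw [chain, if_neg (by omega), Nat.add_sub_cancel_left]

lemma chain_zero : chain cs 0 = 1 := chain_of_le cs (Nat.zero_le n)

lemma chain_succ_of_lt {k : ℕ} (hk : k < n) :
    chain cs (k + 1) = simpleNat cs k * chain cs k := by
  rw [chain_of_le cs hk, chain_of_le cs hk.le, descendingWord_succ]

lemma chain_succ_of_add {i k : ℕ} (hi : i < n) (hk : k + i + 2 = 2 * n) :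
    chain cs (k + 1) = simpleNat cs i * chain cs k := by
  obtain rfl | hi' : i = n - 1 ∨ i + 1 < n := by omega
  · obtain rfl : k = n - 1 := by omega
    exact chain_succ_of_lt cs hi
  · obtain ⟨m, rfl⟩ : ∃ m, k = n + m := ⟨k - n, by omega⟩
    rw [add_assoc, chain_add, chain_add, hookWord_succ, show n - 2 - m = i by omega]

/-- Left multiplication by a simple generator either moves an element of the chain to a
neighbour, or passes through it as a simple generator other than the first. -/
lemma simpleNat_mul_chain (hM : IsTypeB M) {i k : ℕ} (hi : i < n) (hk : k < 2 * n) :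
    simpleNat cs i * chain cs k = chain cs (chainSwap n i k) ∨
      chainSwap n i k = k ∧
        ∃ j, 0 < j ∧ j < n ∧ simpleNat cs i * chain cs k = chain cs k * simpleNat cs j := by
  rw [chainSwap_apply]
  split_ifs with h1 h2 h3 h4
  · left
    rw [h1, chain_succ_of_lt cs hi]
  · left
    rw [h2, chain_succ_of_lt cs hi, simpleNat_mul_cancel_left]
  · exact Or.inl (chain_succ_of_add cs hi h3).symm
  · left
    obtain ⟨k, rfl⟩ : ∃ k', k = k' + 1 := ⟨k - 1, by omega⟩
    rw [chain_succ_of_add cs hi (by omega), simpleNat_mul_cancel_left, Nat.add_sub_cancel]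
  · refine Or.inr ⟨rfl, ?_⟩
    by_cases hkn : k ≤ n
    · rw [chain_of_le cs hkn]
      obtain h | h := lt_or_gt_of_ne h1
      · exact ⟨i, by omega, hi, simpleNat_mul_descendingWord_of_lt cs hM h hi⟩
      · exact ⟨i + 1, by omega, by omega,
          simpleNat_mul_descendingWord_of_gt cs hM (by omega) (by omega) hkn⟩
    · obtain ⟨m, rfl⟩ : ∃ m, k = n + m := ⟨k - n, by omega⟩
      rw [chain_add]
      by_cases h : n ≤ i + m
      · exact ⟨i, by omega, hi, simpleNat_mul_hookWord_of_gt cs hM h hi (by omega)⟩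
      · exact ⟨i + 1, by omega, by omega, simpleNat_mul_hookWord_of_lt cs hM (by omega)⟩

lemma chainSwap_lt {i k : ℕ} (hi : i < n) (hk : k < 2 * n) : chainSwap n i k < 2 * n := by
  rw [chainSwap_apply]; split_ifs <;> omega

lemma chainSwap_le (n i k : ℕ) : chainSwap n i k ≤ k + 1 := by
  rw [chainSwap_apply]; split_ifs <;> omega

section Action

variable (hM : IsTypeB M)

lemma chainAction_simple (i : Fin n) : chainAction cs hM (cs.simple i) = chainSwap n i :=
  cs.lift_apply_simple (chainSwap_isLiftable hM) i

lemma chainAction_simple_mul (i : Fin n) (w : W) (k : ℕ) :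
    chainAction cs hM (cs.simple i * w) k = chainSwap n i (chainAction cs hM w k) := by
  rw [map_mul, chainAction_simple]
  rfl

lemma chainAction_mul_simple (i : Fin n) (w : W) (k : ℕ) :
    chainAction cs hM (w * cs.simple i) k = chainAction cs hM w (chainSwap n i k) := by
  rw [map_mul, chainAction_simple]
  rfl

lemma chainAction_one (k : ℕ) : chainAction cs hM 1 k = k := by
  rw [map_one]
  rfl

lemma chainAction_chain {k : ℕ} (hk : k < 2 * n) : chainAction cs hM (chain cs k) 0 = k := by
  induction k with
  | zero => rw [chain_zero, chainAction_one]
  | succ k ih =>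
    by_cases h : k < n
    · rw [chain_succ_of_lt cs h, simpleNat_of_lt cs h, chainAction_simple_mul, ih (by omega)]
      simp [chainSwap_apply]
    · have hi : 2 * n - 2 - k < n := by omega
      rw [chain_succ_of_add cs hi (by omega), simpleNat_of_lt cs hi, chainAction_simple_mul,
        ih (by omega), chainSwap_apply]
      dsimp only
      split_ifs <;> omega

/-- Every word factors as an element of the chain times a word avoiding the first generator,
with no increase in the number of letters. -/
lemma exists_wordProd_eq_chain_mul (hn : 0 < n) (ω : List (Fin n)) :
    ∃ k < 2 * n, ∃ τ : List (Fin n), (∀ j ∈ τ, (j : ℕ) ≠ 0) ∧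
      chainAction cs hM (cs.wordProd ω) 0 = k ∧
      cs.wordProd ω = chain cs k * cs.wordProd τ ∧ k + τ.length ≤ ω.length := by
  induction ω with
  | nil =>
    exact ⟨0, by omega, [], by simp, by simp [chainAction_one], by simp [chain_zero], by simp⟩
  | cons i ω ih =>
    obtain ⟨k, hk, τ, hτ, hact, hprod, hlen⟩ := ih
    refine ⟨chainSwap n i k, chainSwap_lt i.isLt hk, ?_⟩
    have hact' : chainAction cs hM (cs.wordProd (i :: ω)) 0 = chainSwap n i k := by
      rw [cs.wordProd_cons, chainAction_simple_mul, hact]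
    have hi : cs.simple i = simpleNat cs i := (simpleNat_of_lt cs i.isLt).symm
    obtain h | ⟨hfix, j, hj, hjn, h⟩ := simpleNat_mul_chain cs hM i.isLt hk
    · refine ⟨τ, hτ, hact', ?_, ?_⟩
      · rw [cs.wordProd_cons, hprod, ← mul_assoc, hi, h]
      · have := chainSwap_le n i k
        rw [List.length_cons]
        omega
    · refine ⟨⟨j, hjn⟩ :: τ, ?_, hact', ?_, ?_⟩
      · simpa using ⟨hj.ne', hτ⟩
      · rw [cs.wordProd_cons, cs.wordProd_cons, hprod, ← mul_assoc, hi, h, hfix,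
          simpleNat_of_lt cs hjn, mul_assoc]
      · rw [hfix, List.length_cons, List.length_cons]
        omega

lemma chainAction_le_length (hn : 0 < n) (w : W) : chainAction cs hM w 0 ≤ cs.length w := by
  obtain ⟨ω, hω, rfl⟩ := cs.exists_isReduced w
  obtain ⟨k, -, τ, -, hact, -, hlen⟩ := exists_wordProd_eq_chain_mul cs hM hn ω
  rw [hact, hω.eq]
  omega

end Action

lemma length_chain_le {k : ℕ} (hk : k < 2 * n) : cs.length (chain cs k) ≤ k := by
  induction k with
  | zero => simp [chain_zero]
  | succ k ih =>
    obtain ⟨i, hi, h⟩ : ∃ i < n, chain cs (k + 1) = simpleNat cs i * chain cs k := by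
      by_cases h : k < n
      · exact ⟨k, h, chain_succ_of_lt cs h⟩
      · exact ⟨2 * n - 2 - k, by omega, chain_succ_of_add cs (by omega) (by omega)⟩
    have := cs.length_mul_le (simpleNat cs i) (chain cs k)
    rw [h]
    have h1 : cs.length (simpleNat cs i) = 1 := by rw [simpleNat_of_lt cs hi, cs.length_simple]
    have := ih (by omega)
    omega

lemma chain_injOn (hM : IsTypeB M) {k l : ℕ} (hk : k < 2 * n) (hl : l < 2 * n)
    (h : chain cs k = chain cs l) : k = l := by
  rw [← chainAction_chain cs hM hk, h, chainAction_chain cs hM hl]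

lemma length_chain (hM : IsTypeB M) {k : ℕ} (hk : k < 2 * n) : cs.length (chain cs k) = k := by
  refine le_antisymm (length_chain_le cs hk) ?_
  simpa only [chainAction_chain cs hM hk] using
    chainAction_le_length cs hM (by omega) (chain cs k)

lemma not_isRightDescent_chain (hM : IsTypeB M) {k : ℕ} (hk : k < 2 * n) {i : Fin n}
    (hi : (i : ℕ) ≠ 0) :
    ¬ cs.IsRightDescent (chain cs k) i := by
  have h := chainAction_le_length cs hM (by omega) (chain cs k * cs.simple i)
  have h0 : chainSwap n i 0 = 0 := by
    have := i.isLt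
    rw [chainSwap_apply, if_neg (by omega), if_neg (by omega), if_neg (by omega),
      if_neg (by omega)]
  rw [chainAction_mul_simple, h0, chainAction_chain cs hM hk] at h
  rw [CoxeterSystem.IsRightDescent, length_chain cs hM hk]
  omega

lemma exists_eq_chain (hM : IsTypeB M) (hn : 0 < n) {w : W}
    (hw : ∀ i : Fin n, (i : ℕ) ≠ 0 → ¬ cs.IsRightDescent w i) :
    ∃ k < 2 * n, w = chain cs k := by
  obtain ⟨ω, hω, rfl⟩ := cs.exists_isReduced w
  obtain ⟨k, hk, τ, hτ, -, hprod, hlen⟩ := exists_wordProd_eq_chain_mul cs hM hn ω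
  obtain rfl | ⟨τ, j, rfl⟩ := τ.eq_nil_or_concat'
  · exact ⟨k, hk, by simpa using hprod⟩
  · refine absurd ?_ (hw j (hτ j (by simp)))
    have h : cs.wordProd ω * cs.simple j = chain cs k * cs.wordProd τ := by
      rw [hprod, cs.wordProd_append, cs.wordProd_singleton, mul_assoc,
        cs.simple_mul_simple_cancel_right]
    rw [CoxeterSystem.IsRightDescent, h, hω.eq]
    have h1 := cs.length_mul_le (chain cs k) (cs.wordProd τ)
    have h2 := length_chain_le cs hk
    have h3 := cs.length_wordProd_le τ
    rw [List.length_append, List.length_singleton] at hlen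
    omega

lemma isLeftDescent_chain_iff (hM : IsTypeB M) {k : ℕ} (hk : k < 2 * n) (i : Fin n) :
    cs.IsLeftDescent (chain cs k) i ↔ chainSwap n i k < k := by
  rw [CoxeterSystem.IsLeftDescent, length_chain cs hM hk]
  constructor
  · intro h
    have h' := chainAction_le_length cs hM (by omega) (cs.simple i * chain cs k)
    rw [chainAction_simple_mul, chainAction_chain cs hM hk] at h'
    omega
  · intro h
    obtain h' | ⟨h', -⟩ := simpleNat_mul_chain cs hM i.isLt hk
    · rw [simpleNat_of_lt cs i.isLt] at h'
      rw [h', length_chain cs hM (by omega)]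
      exact h
    · omega

end TypeB

/-- The `{2,…,n}`-positive elements of the Coxeter group of type `Bₙ` (`n ≥ 2`):
the set of `w` with no right descent in `{2,…,n}` is exactly the `2n` pairwise
distinct elements `{1, s₁, s₂s₁, …, sₙ⋯s₁, sₙ₋₁sₙsₙ₋₁⋯s₁, …, s₁s₂⋯sₙ⋯s₁}`;
the left descent set of `sⱼ⋯s₁` (`1 ≤ j ≤ n`) is `{j}` and the left descent set
of `sⱼsⱼ₊₁⋯sₙ₋₁sₙsₙ₋₁⋯s₁` (`1 ≤ j ≤ n-1`) is `{j}`.  Here the simple generator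
`sᵢ` (`1 ≤ i ≤ n`) is `cs.simple ⟨i - 1, _⟩`. -/
theorem typeB_positive_weyl_group
    (n : ℕ) (hn : 2 ≤ n) {W : Type*} [Group W]
    (M : CoxeterMatrix (Fin n))
    (hM : ∀ i j : Fin n, i ≠ j →
      M i j = if (i : ℕ) + 1 = (j : ℕ) ∨ (j : ℕ) + 1 = (i : ℕ) then
          (if (i : ℕ) = n - 1 ∨ (j : ℕ) = n - 1 then 4 else 3) else 2)
    (cs : CoxeterSystem M W) :
    ({w : W | ∀ i : Fin n, (i : ℕ) ≠ 0 → ¬ cs.IsRightDescent w i}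
        = {w : W | (∃ j ≤ n, w = descendingWord cs j)
            ∨ (∃ m, 1 ≤ m ∧ m ≤ n - 1 ∧ w = hookWord cs m)}) ∧
    (∀ j ≤ n, ∀ k ≤ n, descendingWord cs j = descendingWord cs k → j = k) ∧
    (∀ m, 1 ≤ m → m ≤ n - 1 → ∀ m', 1 ≤ m' → m' ≤ n - 1 →
      hookWord cs m = hookWord cs m' → m = m') ∧
    (∀ j ≤ n, ∀ m, 1 ≤ m → m ≤ n - 1 → descendingWord cs j ≠ hookWord cs m) ∧
    (∀ j, 1 ≤ j → j ≤ n → ∀ i : Fin n,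
      cs.IsLeftDescent (descendingWord cs j) i ↔ (i : ℕ) + 1 = j) ∧
    (∀ j, 1 ≤ j → j ≤ n - 1 → ∀ i : Fin n,
      cs.IsLeftDescent (hookWord cs (n - j)) i ↔ (i : ℕ) + 1 = j) := by
  have hM' : TypeB.IsTypeB M := hM
  have hd : ∀ j ≤ n, descendingWord cs j = TypeB.chain cs j :=
    fun j hj ↦ (TypeB.chain_of_le cs hj).symm
  have hh : ∀ m, hookWord cs m = TypeB.chain cs (n + m) :=
    fun m ↦ (TypeB.chain_add cs m).symm
  refine ⟨?_, ?_, ?_, ?_, ?_, ?_⟩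
  · ext w
    constructor
    · intro hw
      obtain ⟨k, hk, rfl⟩ := TypeB.exists_eq_chain cs hM' (by omega) hw
      by_cases hkn : k ≤ n
      · exact Or.inl ⟨k, hkn, TypeB.chain_of_le cs hkn⟩
      · refine Or.inr ⟨k - n, by omega, by omega, ?_⟩
        rw [hh, Nat.add_sub_cancel' (by omega)]
    · rintro (⟨j, hj, rfl⟩ | ⟨m, -, hm, rfl⟩) i hi
      · rw [hd j hj]
        exact TypeB.not_isRightDescent_chain cs hM' (by omega) hi
      · rw [hh]
        exact TypeB.not_isRightDescent_chain cs hM' (by omega) hi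
  · intro j hj k hk h
    rw [hd j hj, hd k hk] at h
    exact TypeB.chain_injOn cs hM' (by omega) (by omega) h
  · intro m _ hm m' _ hm' h
    rw [hh, hh] at h
    exact Nat.add_left_cancel (TypeB.chain_injOn cs hM' (by omega) (by omega) h)
  · intro j hj m hm hmn h
    rw [hd j hj, hh] at h
    have := TypeB.chain_injOn cs hM' (by omega) (by omega) h
    omega
  · intro j hj hjn i
    have := i.isLt
    rw [hd j hjn, TypeB.isLeftDescent_chain_iff cs hM' (by omega), TypeB.chainSwap_apply]
    split_ifs <;> omega
  · intro j hj hjn i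
    have := i.isLt
    rw [hh, TypeB.isLeftDescent_chain_iff cs hM' (by omega), TypeB.chainSwap_apply]
    split_ifs <;> omega
end

section
/- Let W be the Coxeter group of type Dₙ (n ≥ 4) with simple generators s₁, …, sₙ, Coxeter matrix m(i,i+1) = 3 for 1 ≤ i ≤ n−2, m(n−2,n) = 3, m(n−1,n) = 2, and m(i,j) = 2 for all other pairs i ≠ j, and length function ℓ. Then the set of elements w ∈ W having no right descent in {2, 3, …, n} is exactly the set of 2n elements {1, s₁, s₂s₁, …, sₙ₋₁sₙ₋₂⋯s₁, sₙsₙ₋₂sₙ₋₃⋯s₁, sₙsₙ₋₁sₙ₋₂⋯s₁, sₙ₋₂sₙsₙ₋₁sₙ₋₂⋯s₁, sₙ₋₃sₙ₋₂sₙsₙ₋₁sₙ₋₂⋯s₁, …, s₁s₂⋯sₙ₋₂sₙsₙ₋₁sₙ₋₂⋯s₁}, and these 2n elements are pairwise distinct. Moreover, the left descent sets are: {j} for sⱼsⱼ₋₁⋯s₁ with 1 ≤ j ≤ n−1; {n} for sₙsₙ₋₂sₙ₋₃⋯s₁; {n−1, n} for sₙsₙ₋₁sₙ₋₂⋯s₁;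 and {j} for sⱼsⱼ₊₁⋯sₙ₋₂sₙsₙ₋₁sₙ₋₂⋯s₁ with 1 ≤ j ≤ n−2. -/
/-- In type `Dₙ`: `dHookWord cs 0 = sₙsₙ₋₁sₙ₋₂⋯s₁` and
`dHookWord cs (m+1) = s_{n-2-m} * dHookWord cs m`, so that
`dHookWord cs (n-1-j) = sⱼsⱼ₊₁⋯sₙ₋₂sₙsₙ₋₁sₙ₋₂⋯s₁` for `1 ≤ j ≤ n-2`.
Here the simple generator `sᵢ` (`1 ≤ i ≤ n`) is `cs.simple ⟨i - 1, _⟩`. -/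
def dHookWord {n : ℕ} {W : Type*} [Group W] {M : CoxeterMatrix (Fin n)}
    (cs : CoxeterSystem M W) : ℕ → W
  | 0 => (if h : n - 1 < n then cs.simple ⟨n - 1, h⟩ else 1) * descendingWord cs (n - 1)
  | m + 1 => (if h : n - 3 - m < n then cs.simple ⟨n - 3 - m, h⟩ else 1) * dHookWord cs m

namespace CoxeterSystem

open scoped Classical in
/-- The involution of `W × ZMod 2` attached to a simple reflection `s i`: it conjugates the first
component by `s i` and flips the second component exactly at the reflection `s i` itself. -/
noncomputable def signedConj {B W : Type*} [Group W] {M : CoxeterMatrix B}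
    (cs : CoxeterSystem M W) (i : B) : Function.End (W × ZMod 2) :=
  fun x ↦ (cs.simple i * x.1 * cs.simple i, x.2 + if x.1 = cs.simple i then 1 else 0)

section

variable {B W : Type*} [Group W] {M : CoxeterMatrix B} (cs : CoxeterSystem M W)

theorem end_mul_apply {α : Type*} (f g : Function.End α) (x : α) : (f * g) x = f (g x) := rfl

theorem end_one_apply {α : Type*} (x : α) : (1 : Function.End α) x = x := rfl

theorem simple_mul_simple_pow_mul_simple_mul_pow (i j : B) (k : ℕ) :
    (cs.simple i * cs.simple j) ^ k * cs.simple j * (cs.simple i * cs.simple j) ^ k =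
      cs.simple j := by
  induction k with
  | zero => simp
  | succ k ih =>
    calc
      _ = cs.simple i * cs.simple j * (cs.simple i * cs.simple j) ^ k * cs.simple j *
          ((cs.simple i * cs.simple j) ^ k * (cs.simple i * cs.simple j)) := by
        rw [← pow_succ', ← pow_succ]
      _ = cs.simple i * cs.simple j * ((cs.simple i * cs.simple j) ^ k * cs.simple j *
          (cs.simple i * cs.simple j) ^ k) * (cs.simple i * cs.simple j) := by
        simp only [mul_assoc]
      _ = cs.simple j := by rw [ih]; simp [mul_assoc]

theorem simple_mul_simple_pow_conj_eq_iff (i j : B) (k l : ℕ) (t : W) :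
    (cs.simple i * cs.simple j) ^ l * t * ((cs.simple i * cs.simple j) ^ k)⁻¹ = cs.simple j ↔
      (cs.simple i * cs.simple j) ^ (k + l) * t = cs.simple j := by
  rw [mul_inv_eq_iff_eq_mul, ← mul_right_inj ((cs.simple i * cs.simple j) ^ k), ← mul_assoc,
    ← mul_assoc, simple_mul_simple_pow_mul_simple_mul_pow, pow_add]

open scoped Classical in
theorem signedConj_mul_pow_apply (i j : B) (k : ℕ) (t : W) (e : ZMod 2) :
    ((cs.signedConj i * cs.signedConj j) ^ k) (t, e) =
      ((cs.simple i * cs.simple j) ^ k * t * ((cs.simple i * cs.simple j) ^ k)⁻¹,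
        e + ∑ l ∈ Finset.range (2 * k),
          if (cs.simple i * cs.simple j) ^ l * t = cs.simple j then 1 else 0) := by
  induction k with
  | zero => simp [end_one_apply]
  | succ k ih =>
    set u := (cs.simple i * cs.simple j) ^ k * t * ((cs.simple i * cs.simple j) ^ k)⁻¹ with hu
    have h₁ : u = cs.simple j ↔ (cs.simple i * cs.simple j) ^ (2 * k) * t = cs.simple j := by
      rw [hu, simple_mul_simple_pow_conj_eq_iff, two_mul]
    have h₂ : cs.simple j * u * cs.simple j = cs.simple i ↔
        (cs.simple i * cs.simple j) ^ (2 * k + 1) * t = cs.simple j := by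
      rw [two_mul, add_assoc, ← simple_mul_simple_pow_conj_eq_iff, pow_succ', hu,
        ← mul_right_inj (cs.simple i), ← mul_left_inj (cs.simple j)]
      simp [mul_assoc]
    rw [pow_succ', end_mul_apply, ih, end_mul_apply]
    simp only [signedConj, h₁, h₂]
    refine Prod.ext ?_ ?_
    · simp only [hu, pow_succ' _ k, mul_inv_rev, inv_simple, mul_assoc]
    · rw [mul_add, mul_one, Finset.sum_range_succ, Finset.sum_range_succ]
      simp only [add_assoc]

theorem isLiftable_signedConj : M.IsLiftable cs.signedConj := by
  classical
  intro i j
  funext ⟨t, e⟩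
  rw [signedConj_mul_pow_apply, cs.simple_mul_simple_pow, two_mul, Finset.sum_range_add]
  simp [end_one_apply, pow_add, CharTwo.add_self_eq_zero]

/-- The parity-valued inversion action of `W` on `W × ZMod 2`. -/
noncomputable def signedConjHom : W →* Function.End (W × ZMod 2) :=
  cs.lift ⟨cs.signedConj, cs.isLiftable_signedConj⟩

theorem signedConjHom_simple (i : B) : cs.signedConjHom (cs.simple i) = cs.signedConj i :=
  cs.lift_apply_simple _ i

/-- The inversion parity of `t` with respect to `w`. -/
noncomputable def invParity (w t : W) : ZMod 2 := (cs.signedConjHom w (t, 0)).2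

theorem signedConjHom_apply (w t : W) (e : ZMod 2) :
    cs.signedConjHom w (t, e) = (w * t * w⁻¹, e + cs.invParity w t) := by
  classical
  have hone : ∀ x, cs.signedConjHom 1 x = x := fun x ↦ by rw [map_one]; rfl
  induction w using cs.simple_induction_left generalizing e with
  | one => simp [invParity, hone]
  | mul_simple_left w i ih =>
    have h : ∀ e, cs.signedConjHom (cs.simple i * w) (t, e) =
        cs.signedConj i (w * t * w⁻¹, e + cs.invParity w t) := fun e ↦ by
      rw [map_mul, signedConjHom_simple, end_mul_apply, ih]
    rw [invParity, h, h]
    simp [signedConj, mul_assoc, add_assoc]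

open scoped Classical in
theorem invParity_simple_mul (w t : W) (i : B) :
    cs.invParity (cs.simple i * w) t =
      cs.invParity w t + if cs.simple i * w = w * t then 1 else 0 := by
  rw [invParity, map_mul, signedConjHom_simple, end_mul_apply,
    signedConjHom_apply, zero_add]
  simp only [signedConj, mul_inv_eq_iff_eq_mul, eq_comm (a := w * t)]

theorem invParity_mul_simple_self (w : W) (i : B) :
    cs.invParity (w * cs.simple i) (cs.simple i) = cs.invParity w (cs.simple i) + 1 := by
  rw [invParity, map_mul, signedConjHom_simple, end_mul_apply]
  simp [signedConj, signedConjHom_apply, add_comm]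

theorem mem_rightInvSeq_of_invParity_ne_zero {ω : List B} {t : W}
    (h : cs.invParity (cs.wordProd ω) t ≠ 0) : t ∈ cs.rightInvSeq ω := by
  classical
  induction ω with
  | nil => exact absurd (by rw [wordProd_nil, invParity, map_one]; rfl) h
  | cons i ω ih =>
    rw [wordProd_cons, invParity_simple_mul] at h
    rw [rightInvSeq, List.mem_cons]
    by_cases ht : cs.simple i * cs.wordProd ω = cs.wordProd ω * t
    · exact .inl (by rw [mul_assoc, ht, inv_mul_cancel_left])
    · exact .inr (ih (by simpa [ht] using h))

theorem isRightDescent_iff_invParity_ne_zero {w : W} {i : B} :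
    cs.IsRightDescent w i ↔ cs.invParity w (cs.simple i) ≠ 0 := by
  have key : ∀ v : W, cs.invParity v (cs.simple i) ≠ 0 → cs.IsRightDescent v i := by
    intro v hv
    obtain ⟨ω, hω, rfl⟩ := cs.exists_isReduced v
    exact (cs.isRightInversion_of_mem_rightInvSeq hω
      (cs.mem_rightInvSeq_of_invParity_ne_zero hv)).2
  refine ⟨fun h h0 ↦ ?_, key w⟩
  exact cs.isRightDescent_iff_not_isRightDescent_mul.1 h
    (key _ (by rw [invParity_mul_simple_self, h0]; decide))

/-- Left multiplication of `w` by `s i` creates a right descent `j` only when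
`s i * w = w * s j`. -/
theorem simple_mul_eq_mul_simple_of_isRightDescent {w : W} {i j : B}
    (h : cs.IsRightDescent (cs.simple i * w) j) (hw : ¬ cs.IsRightDescent w j) :
    cs.simple i * w = w * cs.simple j := by
  classical
  by_contra hne
  rw [isRightDescent_iff_invParity_ne_zero] at h hw
  exact hw (by simpa [invParity_simple_mul, hne] using h)

end

end CoxeterSystem

/-- The action of the simple reflection with index `i` (counted from `0`) of type `Dₙ` on the
weights of the vector representation: position `k < n` stands for the `k`-th coordinate vector and
position `2 * n - 1 - k` for its negative. -/
def typeDAct (n i p : ℕ) : ℕ :=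
  if i + 1 = n then
    if p + 2 = n ∨ p + 1 = n then p + 2 else if p = n ∨ p = n + 1 then p - 2 else p
  else
    if p = i ∨ p + i + 2 = 2 * n then p + 1 else if p = i + 1 ∨ p + i + 1 = 2 * n then p - 1 else p

theorem typeDAct_cases {n i : ℕ} (hi : i + 1 < n) (p : ℕ) :
    ((p = i ∨ p + i + 2 = 2 * n) ∧ typeDAct n i p = p + 1) ∨
    ((p = i + 1 ∨ p + i + 1 = 2 * n) ∧ typeDAct n i p + 1 = p) ∨
    (p ≠ i ∧ p + i + 2 ≠ 2 * n ∧ p ≠ i + 1 ∧ p + i + 1 ≠ 2 * n ∧ typeDAct n i p = p) := by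
  unfold typeDAct; split_ifs <;> omega

theorem typeDAct_last_cases {n : ℕ} (hn : 4 ≤ n) (p : ℕ) :
    ((p + 2 = n ∨ p + 1 = n) ∧ typeDAct n (n - 1) p = p + 2) ∨
    ((p = n ∨ p = n + 1) ∧ typeDAct n (n - 1) p + 2 = p) ∨
    (p + 2 ≠ n ∧ p + 1 ≠ n ∧ p ≠ n ∧ p ≠ n + 1 ∧ typeDAct n (n - 1) p = p) := by
  unfold typeDAct; split_ifs <;> omega

theorem typeDAct_involutive {n i : ℕ} (hn : 4 ≤ n) (hi : i < n) (p : ℕ) :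
    typeDAct n i (typeDAct n i p) = p := by
  obtain h | rfl : i + 1 < n ∨ i = n - 1 := by omega
  · have := typeDAct_cases h p
    have := typeDAct_cases h (typeDAct n i p)
    omega
  · have := typeDAct_last_cases hn p
    have := typeDAct_last_cases hn (typeDAct n (n - 1) p)
    omega

theorem typeDAct_comm {n i j : ℕ} (hj : j + 1 < n) (hij : i + 1 < j) (p : ℕ) :
    typeDAct n i (typeDAct n j p) = typeDAct n j (typeDAct n i p) := by
  have hi : i + 1 < n := by omega
  have := typeDAct_cases hi p
  have := typeDAct_cases hj p
  have := typeDAct_cases hi (typeDAct n j p)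
  have := typeDAct_cases hj (typeDAct n i p)
  omega

theorem typeDAct_comm_last {n i : ℕ} (hn : 4 ≤ n) (hi : i + 3 < n ∨ i + 2 = n) (p : ℕ) :
    typeDAct n i (typeDAct n (n - 1) p) = typeDAct n (n - 1) (typeDAct n i p) := by
  have hi' : i + 1 < n := by omega
  have := typeDAct_cases hi' p
  have := typeDAct_last_cases hn p
  have := typeDAct_cases hi' (typeDAct n (n - 1) p)
  have := typeDAct_last_cases hn (typeDAct n i p)
  omega

theorem typeDAct_braid {n i : ℕ} (hi : i + 2 < n) (p : ℕ) :
    typeDAct n i (typeDAct n (i + 1) (typeDAct n i p)) =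
    typeDAct n (i + 1) (typeDAct n i (typeDAct n (i + 1) p)) := by
  have hi' : i + 1 < n := by omega
  have := typeDAct_cases hi' p
  have := typeDAct_cases hi p
  have := typeDAct_cases hi (typeDAct n i p)
  have := typeDAct_cases hi' (typeDAct n (i + 1) p)
  have := typeDAct_cases hi' (typeDAct n (i + 1) (typeDAct n i p))
  have := typeDAct_cases hi (typeDAct n i (typeDAct n (i + 1) p))
  omega

theorem typeDAct_braid_last {n : ℕ} (hn : 4 ≤ n) (p : ℕ) :
    typeDAct n (n - 3) (typeDAct n (n - 1) (typeDAct n (n - 3) p)) =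
    typeDAct n (n - 1) (typeDAct n (n - 3) (typeDAct n (n - 1) p)) := by
  have hi : n - 3 + 1 < n := by omega
  have := typeDAct_cases hi p
  have := typeDAct_last_cases hn p
  have := typeDAct_last_cases hn (typeDAct n (n - 3) p)
  have := typeDAct_cases hi (typeDAct n (n - 1) p)
  have := typeDAct_cases hi (typeDAct n (n - 1) (typeDAct n (n - 3) p))
  have := typeDAct_last_cases hn (typeDAct n (n - 3) (typeDAct n (n - 1) p))
  omega

/-- Adjacency of nodes in the Dynkin diagram of type `Dₙ`, with nodes numbered from `0`. -/
def TypeDAdj (n i j : ℕ) : Prop :=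
  ((i + 1 = j ∨ j + 1 = i) ∧ i + 1 ≠ n ∧ j + 1 ≠ n) ∨
    ((i = n - 3 ∧ j = n - 1) ∨ (j = n - 3 ∧ i = n - 1))

theorem typeDAct_comm_of_not_adj {n i j : ℕ} (hn : 4 ≤ n) (hi : i < n) (hj : j < n)
    (hij : i ≠ j) (h : ¬ TypeDAdj n i j) (p : ℕ) :
    typeDAct n i (typeDAct n j p) = typeDAct n j (typeDAct n i p) := by
  unfold TypeDAdj at h
  wlog hlt : i < j generalizing i j
  · exact (this hj hi hij.symm (by omega) (by omega)).symm
  obtain hj' | rfl : j + 1 < n ∨ j = n - 1 := by omega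
  · exact typeDAct_comm hj' (by omega) p
  · exact typeDAct_comm_last hn (by omega) p

theorem typeDAct_braid_of_adj {n i j : ℕ} (hn : 4 ≤ n) (hi : i < n) (hj : j < n)
    (h : TypeDAdj n i j) (p : ℕ) :
    typeDAct n i (typeDAct n j (typeDAct n i p)) =
      typeDAct n j (typeDAct n i (typeDAct n j p)) := by
  unfold TypeDAdj at h
  wlog hlt : i < j generalizing i j
  · exact (this hj hi (by omega) (by omega)).symm
  obtain ⟨rfl, hj'⟩ | ⟨rfl, rfl⟩ : (j = i + 1 ∧ i + 2 < n) ∨ (i = n - 3 ∧ j = n - 1) := by omega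
  · exact typeDAct_braid hj' p
  · exact typeDAct_braid_last hn p

section

variable {n : ℕ} {W : Type*} [Group W] {M : CoxeterMatrix (Fin n)}

open scoped Classical in
/-- `M` is the Coxeter matrix of type `Dₙ`. -/
def IsTypeD (M : CoxeterMatrix (Fin n)) : Prop :=
  ∀ i j : Fin n, i ≠ j → M i j = if TypeDAdj n i j then 3 else 2

theorem isLiftable_typeDAct (hn : 4 ≤ n) (hM : IsTypeD M) :
    M.IsLiftable (G := Function.End ℕ) (fun i ↦ typeDAct n i) := by
  intro i j
  funext p
  have hinv : ∀ (k : Fin n) (q : ℕ), typeDAct n k (typeDAct n k q) = q :=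
    fun k ↦ typeDAct_involutive hn k.2
  obtain rfl | hij := eq_or_ne i j
  · rw [M.diagonal, pow_one]
    exact hinv i p
  · rw [hM i j hij]
    split_ifs with h
    · change typeDAct n i (typeDAct n j (typeDAct n i (typeDAct n j
        (typeDAct n i (typeDAct n j p))))) = p
      rw [typeDAct_braid_of_adj hn i.2 j.2 h, hinv, hinv, hinv]
    · change typeDAct n i (typeDAct n j (typeDAct n i (typeDAct n j p))) = p
      rw [typeDAct_comm_of_not_adj hn i.2 j.2 (Fin.val_ne_of_ne hij) h, hinv, hinv]

/-- The action on positions of the Coxeter group of type `Dₙ`. -/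
noncomputable def typeDHom (hn : 4 ≤ n) (hM : IsTypeD M) (cs : CoxeterSystem M W) :
    W →* Function.End ℕ :=
  cs.lift ⟨_, isLiftable_typeDAct hn hM⟩

theorem typeDHom_simple_mul (hn : 4 ≤ n) (hM : IsTypeD M) (cs : CoxeterSystem M W) (i : Fin n)
    (w : W) (p : ℕ) :
    typeDHom hn hM cs (cs.simple i * w) p = typeDAct n i (typeDHom hn hM cs w p) := by
  rw [map_mul, CoxeterSystem.end_mul_apply]
  exact congrFun (cs.lift_apply_simple (isLiftable_typeDAct hn hM) i) _

theorem typeDHom_one (hn : 4 ≤ n) (hM : IsTypeD M) (cs : CoxeterSystem M W) (p : ℕ) :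
    typeDHom hn hM cs 1 p = p := by
  rw [map_one, CoxeterSystem.end_one_apply]

theorem typeDHom_mul_simple_zero (hn : 4 ≤ n) (hM : IsTypeD M) (cs : CoxeterSystem M W)
    {j : Fin n} (hj : (j : ℕ) ≠ 0) (w : W) :
    typeDHom hn hM cs (w * cs.simple j) 0 = typeDHom hn hM cs w 0 := by
  have h : typeDHom hn hM cs (cs.simple j) 0 = 0 := by
    rw [← mul_one (cs.simple j), typeDHom_simple_mul, typeDHom_one]
    unfold typeDAct
    split_ifs <;> omega
  rw [map_mul, CoxeterSystem.end_mul_apply, h]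

/-- The number of steps from position `0` to position `p`. -/
def typeDHeight (n p : ℕ) : ℕ := if p < n then p else p - 1

theorem typeDAct_cases_height {i : ℕ} (hn : 4 ≤ n) (hi : i < n) (p : ℕ) (hp : p < 2 * n) :
    typeDAct n i p < 2 * n ∧ (typeDAct n i p = p ∨
      typeDHeight n (typeDAct n i p) = typeDHeight n p + 1 ∨
      typeDHeight n (typeDAct n i p) + 1 = typeDHeight n p) := by
  unfold typeDHeight
  obtain h | rfl : i + 1 < n ∨ i = n - 1 := by omega
  · have := typeDAct_cases h p
    split_ifs <;> omega
  · have := typeDAct_last_cases hn p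
    split_ifs <;> omega

theorem typeDHeight_typeDHom_le (hn : 4 ≤ n) (hM : IsTypeD M) (cs : CoxeterSystem M W) (w : W) :
    typeDHom hn hM cs w 0 < 2 * n ∧ typeDHeight n (typeDHom hn hM cs w 0) ≤ cs.length w := by
  obtain ⟨ω, hω, rfl⟩ := cs.exists_isReduced w
  rw [hω.eq]
  clear hω
  induction ω with
  | nil => simp [typeDHom_one, typeDHeight]; omega
  | cons i ω ih =>
    rw [CoxeterSystem.wordProd_cons, typeDHom_simple_mul, List.length_cons]
    have := typeDAct_cases_height hn i.2 _ ih.1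
    refine ⟨this.1, ?_⟩
    obtain h | h | h := this.2
    · rw [h]; omega
    · omega
    · omega

/-- The simple reflection with index `k`, extended by `1` to out-of-range indices. -/
def simpleNat (cs : CoxeterSystem M W) (k : ℕ) : W := if h : k < n then cs.simple ⟨k, h⟩ else 1

theorem simpleNat_val (cs : CoxeterSystem M W) (i : Fin n) :
    simpleNat cs i = cs.simple i := by simp [simpleNat]

theorem simpleNat_mul_cancel_left (cs : CoxeterSystem M W) (k : ℕ) (w : W) :
    simpleNat cs k * (simpleNat cs k * w) = w := by
  unfold simpleNat
  split_ifs <;> simp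

theorem simpleNat_comm (hM : IsTypeD M) (cs : CoxeterSystem M W) {i j : ℕ} (hi : i < n)
    (hj : j < n) (hij : i ≠ j) (h : ¬ TypeDAdj n i j) :
    simpleNat cs i * simpleNat cs j = simpleNat cs j * simpleNat cs i := by
  have key := cs.simple_mul_simple_pow ⟨i, hi⟩ ⟨j, hj⟩
  rw [hM _ _ (by simpa using hij), if_neg h, pow_two, mul_eq_one_iff_eq_inv, mul_inv_rev,
    cs.inv_simple, cs.inv_simple] at key
  simpa [simpleNat, hi, hj] using key

theorem simpleNat_braid (hM : IsTypeD M) (cs : CoxeterSystem M W) {i j : ℕ} (hi : i < n)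
    (hj : j < n) (hij : i ≠ j) (h : TypeDAdj n i j) :
    simpleNat cs i * simpleNat cs j * simpleNat cs i =
      simpleNat cs j * simpleNat cs i * simpleNat cs j := by
  have key := cs.simple_mul_simple_pow ⟨i, hi⟩ ⟨j, hj⟩
  rw [hM _ _ (by simpa using hij), if_pos h] at key
  have key' : cs.simple ⟨i, hi⟩ * cs.simple ⟨j, hj⟩ * cs.simple ⟨i, hi⟩ *
      (cs.simple ⟨j, hj⟩ * cs.simple ⟨i, hi⟩ * cs.simple ⟨j, hj⟩) = 1 := by
    simpa [pow_succ, mul_assoc] using key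
  rw [mul_eq_one_iff_eq_inv] at key'
  simpa [simpleNat, hi, hj, mul_assoc] using key'

/-- The simple reflection with index `i` normalizes `w` to a simple reflection other than the
first one. -/
def FixesCoset (cs : CoxeterSystem M W) (i : ℕ) (w : W) : Prop :=
  ∃ j : Fin n, (j : ℕ) ≠ 0 ∧ simpleNat cs i * w = w * cs.simple j

theorem FixesCoset.one (cs : CoxeterSystem M W) {i : ℕ} (hi : i < n) (h0 : i ≠ 0) :
    FixesCoset cs i 1 :=
  ⟨⟨i, hi⟩, h0, by simp [simpleNat, hi]⟩

theorem FixesCoset.of_comm (hM : IsTypeD M) (cs : CoxeterSystem M W) {i k : ℕ} (hi : i < n)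
    (hk : k < n) (hik : i ≠ k) (h : ¬ TypeDAdj n i k) {w : W} (hw : FixesCoset cs i w) :
    FixesCoset cs i (simpleNat cs k * w) := by
  obtain ⟨j, hj, hjw⟩ := hw
  refine ⟨j, hj, ?_⟩
  rw [← mul_assoc, simpleNat_comm hM cs hi hk hik h, mul_assoc, hjw, mul_assoc]

theorem FixesCoset.of_braid (hM : IsTypeD M) (cs : CoxeterSystem M W) {i k : ℕ} (hi : i < n)
    (hk : k < n) (hik : i ≠ k) (h : TypeDAdj n i k) {w : W} (hw : FixesCoset cs k w) :
    FixesCoset cs i (simpleNat cs k * (simpleNat cs i * w)) := by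
  obtain ⟨j, hj, hjw⟩ := hw
  refine ⟨j, hj, ?_⟩
  rw [← mul_assoc, ← mul_assoc, simpleNat_braid hM cs hi hk hik h, mul_assoc, hjw]
  simp only [mul_assoc]

/-- The candidate coset representative taking position `0` to position `p`. -/
def typeDRep (cs : CoxeterSystem M W) (p : ℕ) : W :=
  if p < n then descendingWord cs p
  else if p = n then simpleNat cs (n - 1) * descendingWord cs (n - 2)
  else dHookWord cs (p - n - 1)

theorem typeDRep_zero (hn : 4 ≤ n) (cs : CoxeterSystem M W) : typeDRep cs 0 = 1 := by
  rw [typeDRep, if_pos (by omega), descendingWord]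

theorem typeDRep_succ_of_lt (cs : CoxeterSystem M W) {p : ℕ} (hp : p + 1 < n) :
    typeDRep cs (p + 1) = simpleNat cs p * typeDRep cs p := by
  rw [typeDRep, if_pos hp, typeDRep, if_pos (by omega)]
  rfl

theorem typeDRep_self (hn : 4 ≤ n) (cs : CoxeterSystem M W) :
    typeDRep cs n = simpleNat cs (n - 1) * typeDRep cs (n - 2) := by
  rw [typeDRep, if_neg (by omega), if_pos rfl, typeDRep, if_pos (by omega)]

theorem typeDRep_add_one (hn : 4 ≤ n) (cs : CoxeterSystem M W) :
    typeDRep cs (n + 1) = simpleNat cs (n - 1) * typeDRep cs (n - 1) := by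
  rw [typeDRep, if_neg (by omega), if_neg (by omega), typeDRep, if_pos (by omega),
    Nat.add_sub_cancel_left]
  rfl

theorem typeDRep_add_one_eq_mul_self (hn : 4 ≤ n) (hM : IsTypeD M) (cs : CoxeterSystem M W) :
    typeDRep cs (n + 1) = simpleNat cs (n - 2) * typeDRep cs n := by
  have h := typeDRep_succ_of_lt cs (p := n - 2) (by omega)
  rw [show n - 2 + 1 = n - 1 by omega] at h
  rw [typeDRep_add_one hn, h, typeDRep_self hn, ← mul_assoc, ← mul_assoc,
    simpleNat_comm hM cs (i := n - 1) (j := n - 2) (by omega) (by omega) (by omega)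
      (by unfold TypeDAdj; omega)]

theorem typeDRep_succ_of_gt (cs : CoxeterSystem M W) {p : ℕ} (hp : n < p) :
    typeDRep cs (p + 1) = simpleNat cs (2 * n - 2 - p) * typeDRep cs p := by
  rw [typeDRep, if_neg (by omega), if_neg (by omega), typeDRep, if_neg (by omega),
    if_neg (by omega), show p + 1 - n - 1 = (p - n - 1) + 1 by omega,
    show 2 * n - 2 - p = n - 3 - (p - n - 1) by omega]
  rfl

theorem typeDRep_of_typeDAct_gt (hn : 4 ≤ n) (hM : IsTypeD M) (cs : CoxeterSystem M W) {i p : ℕ}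
    (hi : i < n) (h : p < typeDAct n i p) :
    typeDRep cs (typeDAct n i p) = simpleNat cs i * typeDRep cs p := by
  obtain hi' | rfl : i + 1 < n ∨ i = n - 1 := by omega
  · obtain ⟨hp, e⟩ : (p = i ∨ p + i + 2 = 2 * n) ∧ typeDAct n i p = p + 1 := by
      have := typeDAct_cases hi' p
      omega
    rw [e]
    obtain rfl | rfl | hpn : p = i ∨ p = n ∨ n < p := by omega
    · exact typeDRep_succ_of_lt cs hi'
    · rw [typeDRep_add_one_eq_mul_self hn hM, show i = p - 2 by omega]
    · rw [typeDRep_succ_of_gt cs hpn, show i = 2 * n - 2 - p by omega]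
  · obtain ⟨hp, e⟩ : (p = n - 2 ∨ p = n - 1) ∧ typeDAct n (n - 1) p = p + 2 := by
      have := typeDAct_last_cases hn p
      omega
    rw [e]
    obtain rfl | rfl := hp
    · rw [show n - 2 + 2 = n by omega, typeDRep_self hn]
    · rw [show n - 1 + 2 = n + 1 by omega, typeDRep_add_one hn]

theorem simpleNat_mul_typeDRep (hn : 4 ≤ n) (hM : IsTypeD M) (cs : CoxeterSystem M W) {i p : ℕ}
    (hi : i < n) (h : typeDAct n i p ≠ p) :
    simpleNat cs i * typeDRep cs p = typeDRep cs (typeDAct n i p) := by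
  obtain hlt | hgt := h.symm.lt_or_gt
  · exact (typeDRep_of_typeDAct_gt hn hM cs hi hlt).symm
  · have := typeDRep_of_typeDAct_gt hn hM cs (p := typeDAct n i p) hi
      (by rwa [typeDAct_involutive hn hi])
    rw [typeDAct_involutive hn hi] at this
    rw [this, simpleNat_mul_cancel_left]

theorem typeDAct_eq_self_iff {i p : ℕ} (hn : 4 ≤ n) (hi : i < n) :
    typeDAct n i p = p ↔
      (i + 1 < n ∧ p ≠ i ∧ p + i + 2 ≠ 2 * n ∧ p ≠ i + 1 ∧ p + i + 1 ≠ 2 * n) ∨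
      (i + 1 = n ∧ p + 2 ≠ n ∧ p + 1 ≠ n ∧ p ≠ n ∧ p ≠ n + 1) := by
  obtain h | rfl : i + 1 < n ∨ i = n - 1 := by omega
  · have := typeDAct_cases h p
    omega
  · have := typeDAct_last_cases hn p
    omega

theorem fixesCoset_typeDRep (hn : 4 ≤ n) (hM : IsTypeD M) (cs : CoxeterSystem M W) {i p : ℕ}
    (hi : i < n) (hp : p < 2 * n) (h : typeDAct n i p = p) :
    FixesCoset cs i (typeDRep cs p) := by
  induction p using Nat.strong_induction_on generalizing i with
  | _ p ih =>
  rw [typeDAct_eq_self_iff hn hi] at h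
  have ih' : ∀ q < p, ∀ k < n,
      ((k + 1 < n ∧ q ≠ k ∧ q + k + 2 ≠ 2 * n ∧ q ≠ k + 1 ∧ q + k + 1 ≠ 2 * n) ∨
        (k + 1 = n ∧ q + 2 ≠ n ∧ q + 1 ≠ n ∧ q ≠ n ∧ q ≠ n + 1)) →
      FixesCoset cs k (typeDRep cs q) := fun q hq k hk hkq ↦
    ih q hq hk (by omega) ((typeDAct_eq_self_iff hn hk).2 hkq)
  -- It suffices to peel off one letter (commutation) or two letters (braid relation).
  have comm : ∀ k < n, ∀ q < p, typeDRep cs p = simpleNat cs k * typeDRep cs q → i ≠ k →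
      ¬ TypeDAdj n i k →
      ((i + 1 < n ∧ q ≠ i ∧ q + i + 2 ≠ 2 * n ∧ q ≠ i + 1 ∧ q + i + 1 ≠ 2 * n) ∨
        (i + 1 = n ∧ q + 2 ≠ n ∧ q + 1 ≠ n ∧ q ≠ n ∧ q ≠ n + 1)) →
      FixesCoset cs i (typeDRep cs p) := by
    intro k hk q hq e hik hadj hfix
    rw [e]
    exact .of_comm hM cs hi hk hik hadj (ih' q hq i hi hfix)
  have braid : ∀ k < n, ∀ q, ∀ r < p, typeDRep cs p = simpleNat cs k * typeDRep cs q →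
      typeDRep cs q = simpleNat cs i * typeDRep cs r → i ≠ k → TypeDAdj n i k →
      ((k + 1 < n ∧ r ≠ k ∧ r + k + 2 ≠ 2 * n ∧ r ≠ k + 1 ∧ r + k + 1 ≠ 2 * n) ∨
        (k + 1 = n ∧ r + 2 ≠ n ∧ r + 1 ≠ n ∧ r ≠ n ∧ r ≠ n + 1)) →
      FixesCoset cs i (typeDRep cs p) := by
    intro k hk q r hr e e' hik hadj hfix
    rw [e, e']
    exact .of_braid hM cs hi hk hik hadj (ih' r hr k hk hfix)
  unfold TypeDAdj at comm braid
  obtain rfl | hp0 := Nat.eq_zero_or_pos p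
  · rw [typeDRep_zero hn]
    exact .one cs hi (by omega)
  obtain hpn | rfl | rfl | hpn : p < n ∨ p = n ∨ p = n + 1 ∨ n + 1 < p := by omega
  · obtain ⟨k, rfl⟩ : ∃ k, p = k + 1 := ⟨p - 1, by omega⟩
    have e := typeDRep_succ_of_lt cs hpn
    by_cases hik : i + 1 = k
    · subst hik
      exact braid _ (by omega) _ i (by omega) e (typeDRep_succ_of_lt cs (by omega))
        (by omega) (by omega) (by omega)
    · exact comm k (by omega) k (by omega) e (by omega) (by omega) (by omega)
  · have e := typeDRep_self hn cs
    by_cases hik : i + 3 = p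
    · refine braid _ (by omega) _ (p - 3) (by omega) e ?_ (by omega) (by omega) (by omega)
      have := typeDRep_succ_of_lt cs (p := p - 3) (by omega)
      rw [show p - 3 + 1 = p - 2 by omega] at this
      rw [this, show p - 3 = i by omega]
    · exact comm _ (by omega) _ (by omega) e (by omega) (by omega) (by omega)
  · exact comm _ (by omega) _ (by omega) (typeDRep_add_one hn cs) (by omega) (by omega) (by omega)
  · obtain ⟨q, rfl⟩ : ∃ q, p = q + 1 := ⟨p - 1, by omega⟩
    have e := typeDRep_succ_of_gt cs (p := q) (by omega)
    by_cases hlast : i + 1 = n ∧ q = n + 1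
    · obtain ⟨hin, rfl⟩ := hlast
      refine braid _ (by omega) _ (n - 1) (by omega) e ?_ (by omega) (by omega) (by omega)
      rw [typeDRep_add_one hn, show n - 1 = i by omega]
    by_cases hik : i = 2 * n - 2 - q + 1
    · by_cases hq : q = n + 1
      · subst hq
        refine braid _ (by omega) _ n (by omega) e ?_ (by omega) (by omega) (by omega)
        rw [typeDRep_add_one_eq_mul_self hn hM, show n - 2 = i by omega]
      · obtain ⟨r, rfl⟩ : ∃ r, q = r + 1 := ⟨q - 1, by omega⟩
        refine braid _ (by omega) _ r (by omega) e ?_ (by omega) (by omega) (by omega)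
        rw [typeDRep_succ_of_gt cs (by omega), show 2 * n - 2 - r = i by omega]
    · exact comm _ (by omega) _ (by omega) e (by omega) (by omega) (by omega)

theorem exists_typeDAct_eq {p : ℕ} (hn : 4 ≤ n) (hp : p < 2 * n) (h0 : p ≠ 0) :
    ∃ i < n, ∃ q < p, typeDAct n i q = p ∧ typeDHeight n p = typeDHeight n q + 1 := by
  have h₁ : p < n → typeDAct n (p - 1) (p - 1) = p := fun h ↦ by
    have := typeDAct_cases (n := n) (i := p - 1) (by omega) (p - 1)
    omega
  have h₂ : p = n ∨ p = n + 1 → typeDAct n (n - 1) (p - 2) = p := fun h ↦ by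
    have := typeDAct_last_cases hn (p - 2)
    omega
  have h₃ : n + 1 < p → typeDAct n (2 * n - 1 - p) (p - 1) = p := fun h ↦ by
    have := typeDAct_cases (n := n) (i := 2 * n - 1 - p) (by omega) (p - 1)
    omega
  unfold typeDHeight
  obtain h | h | h : p < n ∨ (p = n ∨ p = n + 1) ∨ n + 1 < p := by omega
  · exact ⟨p - 1, by omega, p - 1, by omega, h₁ h, by split_ifs <;> omega⟩
  · exact ⟨n - 1, by omega, p - 2, by omega, h₂ h, by split_ifs <;> omega⟩
  · exact ⟨2 * n - 1 - p, by omega, p - 1, by omega, h₃ h, by split_ifs <;> omega⟩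

theorem typeDRep_spec (hn : 4 ≤ n) (hM : IsTypeD M) (cs : CoxeterSystem M W) {p : ℕ}
    (hp : p < 2 * n) :
    typeDHom hn hM cs (typeDRep cs p) 0 = p ∧ cs.length (typeDRep cs p) ≤ typeDHeight n p ∧
      ∀ j : Fin n, (j : ℕ) ≠ 0 → ¬ cs.IsRightDescent (typeDRep cs p) j := by
  induction p using Nat.strong_induction_on with
  | _ p ih =>
  obtain rfl | h0 := eq_or_ne p 0
  · rw [typeDRep_zero hn, typeDHom_one, cs.length_one]
    exact ⟨rfl, Nat.zero_le _, fun j _ ↦ cs.not_isRightDescent_one j⟩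
  obtain ⟨i, hi, q, hqp, hact, hh⟩ := exists_typeDAct_eq hn hp h0
  obtain ⟨hq, hlen, hdesc⟩ := ih q hqp (by omega)
  have e : typeDRep cs p = cs.simple ⟨i, hi⟩ * typeDRep cs q := by
    rw [← simpleNat_val, simpleNat_mul_typeDRep hn hM cs hi (by omega), hact]
  have hpos : typeDHom hn hM cs (typeDRep cs p) 0 = p := by
    rw [e, typeDHom_simple_mul, hq, hact]
  refine ⟨hpos, ?_, fun j hj hjd ↦ ?_⟩
  · have := cs.length_mul_le (cs.simple ⟨i, hi⟩) (typeDRep cs q)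
    rw [cs.length_simple] at this
    rw [e]
    omega
  · rw [e] at hjd hpos
    have := cs.simple_mul_eq_mul_simple_of_isRightDescent hjd (hdesc j hj)
    rw [this, typeDHom_mul_simple_zero hn hM cs hj] at hpos
    omega

theorem length_typeDRep (hn : 4 ≤ n) (hM : IsTypeD M) (cs : CoxeterSystem M W) {p : ℕ}
    (hp : p < 2 * n) : cs.length (typeDRep cs p) = typeDHeight n p := by
  obtain ⟨hpos, hle, -⟩ := typeDRep_spec hn hM cs hp
  have := (typeDHeight_typeDHom_le hn hM cs (typeDRep cs p)).2
  rw [hpos] at this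
  omega

theorem typeDRep_injOn (hn : 4 ≤ n) (hM : IsTypeD M) (cs : CoxeterSystem M W) :
    Set.InjOn (typeDRep cs) (Set.Iio (2 * n)) := fun p hp q hq h ↦ by
  rw [← (typeDRep_spec hn hM cs hp).1, h, (typeDRep_spec hn hM cs hq).1]

theorem isLeftDescent_typeDRep_iff (hn : 4 ≤ n) (hM : IsTypeD M) (cs : CoxeterSystem M W) {p : ℕ}
    (hp : p < 2 * n) (i : Fin n) :
    cs.IsLeftDescent (typeDRep cs p) i ↔ typeDAct n i p < p := by
  obtain h | h := eq_or_ne (typeDAct n i p) p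
  · obtain ⟨j, hj, e⟩ := fixesCoset_typeDRep hn hM cs i.2 hp h
    have := (typeDRep_spec hn hM cs hp).2.2 j hj
    rw [simpleNat_val] at e
    rw [CoxeterSystem.IsRightDescent, ← e] at this
    simpa [h, CoxeterSystem.IsLeftDescent] using this
  · have hc := typeDAct_cases_height hn i.2 p hp
    rw [CoxeterSystem.IsLeftDescent, ← simpleNat_val, simpleNat_mul_typeDRep hn hM cs i.2 h,
      length_typeDRep hn hM cs hp, length_typeDRep hn hM cs hc.1]
    unfold typeDHeight at hc ⊢
    split_ifs at hc ⊢ <;> omega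

theorem exists_eq_typeDRep (hn : 4 ≤ n) (hM : IsTypeD M) (cs : CoxeterSystem M W) {w : W}
    (hw : ∀ j : Fin n, (j : ℕ) ≠ 0 → ¬ cs.IsRightDescent w j) :
    ∃ p < 2 * n, w = typeDRep cs p := by
  induction hk : cs.length w using Nat.strong_induction_on generalizing w with
  | _ k ih =>
  obtain rfl | hne := eq_or_ne w 1
  · exact ⟨0, by omega, (typeDRep_zero hn cs).symm⟩
  obtain ⟨i, hi⟩ := cs.exists_leftDescent_of_ne_one hne
  have hlen : cs.length (cs.simple i * w) < cs.length w := hi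
  obtain ⟨p, hp, e⟩ := ih _ (hk ▸ hlen) (w := cs.simple i * w) (fun j hj hjd ↦ by
    refine hw j hj ?_
    rwa [CoxeterSystem.IsRightDescent,
      ← cs.simple_mul_eq_mul_simple_of_isRightDescent hjd (hw j hj)]) rfl
  have hw' : w = simpleNat cs i * typeDRep cs p := by
    rw [← e, simpleNat_val, cs.simple_mul_simple_cancel_left]
  by_cases h : typeDAct n i p = p
  · obtain ⟨j, hj, e'⟩ := fixesCoset_typeDRep hn hM cs i.2 hp h
    refine absurd ?_ (hw j hj)
    have : w * cs.simple j = cs.simple i * w := by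
      rw [e, hw', e', cs.simple_mul_simple_cancel_right]
    rwa [CoxeterSystem.IsRightDescent, this]
  · exact ⟨_, (typeDAct_cases_height hn i.2 p hp).1,
      hw'.trans (simpleNat_mul_typeDRep hn hM cs i.2 h)⟩

theorem descendingWord_eq_typeDRep (cs : CoxeterSystem M W) {j : ℕ} (hj : j < n) :
    descendingWord cs j = typeDRep cs j := by
  rw [typeDRep, if_pos hj]

theorem simple_last_mul_descendingWord_eq_typeDRep (cs : CoxeterSystem M W) (h : n - 1 < n) :
    cs.simple ⟨n - 1, h⟩ * descendingWord cs (n - 2) = typeDRep cs n := by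
  rw [typeDRep, if_neg (by omega), if_pos rfl, simpleNat, dif_pos h]

theorem dHookWord_eq_typeDRep (cs : CoxeterSystem M W) (m : ℕ) :
    dHookWord cs m = typeDRep cs (n + 1 + m) := by
  rw [typeDRep, if_neg (by omega), if_neg (by omega)]
  congr 1
  omega

end

/-- The `{2,…,n}`-positive elements of the Coxeter group of type `Dₙ` (`n ≥ 4`):
the set of `w` with no right descent in `{2,…,n}` is exactly the `2n` pairwise
distinct elements `{1, s₁, s₂s₁, …, sₙ₋₁⋯s₁, sₙsₙ₋₂sₙ₋₃⋯s₁, sₙsₙ₋₁sₙ₋₂⋯s₁,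
sₙ₋₂sₙsₙ₋₁sₙ₋₂⋯s₁, …, s₁s₂⋯sₙ₋₂sₙsₙ₋₁sₙ₋₂⋯s₁}`, with the indicated left
descent sets.  Here the simple generator `sᵢ` (`1 ≤ i ≤ n`) is
`cs.simple ⟨i - 1, _⟩`. -/
theorem typeD_positive_weyl_group
    (n : ℕ) (hn : 4 ≤ n) {W : Type*} [Group W]
    (M : CoxeterMatrix (Fin n))
    (hM : ∀ i j : Fin n, i ≠ j →
      M i j = if (((i : ℕ) + 1 = (j : ℕ) ∨ (j : ℕ) + 1 = (i : ℕ))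
            ∧ (i : ℕ) + 1 ≠ n ∧ (j : ℕ) + 1 ≠ n)
          ∨ (((i : ℕ) = n - 3 ∧ (j : ℕ) = n - 1) ∨ ((j : ℕ) = n - 3 ∧ (i : ℕ) = n - 1))
        then 3 else 2)
    (cs : CoxeterSystem M W) :
    ({w : W | ∀ i : Fin n, (i : ℕ) ≠ 0 → ¬ cs.IsRightDescent w i}
        = {w : W | (∃ j ≤ n - 1, w = descendingWord cs j)
            ∨ w = cs.simple ⟨n - 1, by omega⟩ * descendingWord cs (n - 2)
            ∨ (∃ m ≤ n - 2, w = dHookWord cs m)}) ∧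
    (∀ j ≤ n - 1, ∀ k ≤ n - 1, descendingWord cs j = descendingWord cs k → j = k) ∧
    (∀ m ≤ n - 2, ∀ m' ≤ n - 2, dHookWord cs m = dHookWord cs m' → m = m') ∧
    (∀ j ≤ n - 1,
      descendingWord cs j ≠ cs.simple ⟨n - 1, by omega⟩ * descendingWord cs (n - 2)) ∧
    (∀ m ≤ n - 2,
      dHookWord cs m ≠ cs.simple ⟨n - 1, by omega⟩ * descendingWord cs (n - 2)) ∧
    (∀ j ≤ n - 1, ∀ m ≤ n - 2, descendingWord cs j ≠ dHookWord cs m) ∧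
    (∀ j, 1 ≤ j → j ≤ n - 1 → ∀ i : Fin n,
      cs.IsLeftDescent (descendingWord cs j) i ↔ (i : ℕ) + 1 = j) ∧
    (∀ i : Fin n,
      cs.IsLeftDescent (cs.simple ⟨n - 1, by omega⟩ * descendingWord cs (n - 2)) i
        ↔ (i : ℕ) + 1 = n) ∧
    (∀ i : Fin n,
      cs.IsLeftDescent (dHookWord cs 0) i ↔ ((i : ℕ) + 1 = n - 1 ∨ (i : ℕ) + 1 = n)) ∧
    (∀ j, 1 ≤ j → j ≤ n - 2 → ∀ i : Fin n,
      cs.IsLeftDescent (dHookWord cs (n - 1 - j)) i ↔ (i : ℕ) + 1 = j) := by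
  have hD : IsTypeD M := by
    classical
    intro i j hij
    rw [hM i j hij]
    exact if_congr Iff.rfl rfl rfl
  have hinj := typeDRep_injOn hn hD cs
  simp only [Set.InjOn, Set.mem_Iio] at hinj
  have hdesc : ∀ j ≤ n - 1, descendingWord cs j = typeDRep cs j :=
    fun j hj ↦ descendingWord_eq_typeDRep cs (by omega)
  have hlast := simple_last_mul_descendingWord_eq_typeDRep cs (by omega)
  have hact : ∀ (i : Fin n) (p : ℕ), typeDAct n i p < p ↔
      ((i : ℕ) + 1 < n ∧ (p = i + 1 ∨ p + i + 1 = 2 * n)) ∨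
        ((i : ℕ) + 1 = n ∧ (p = n ∨ p = n + 1)) := by
    intro i p
    unfold typeDAct
    split_ifs <;> omega
  rw [hlast]
  refine ⟨Set.ext fun w ↦ ⟨fun hw ↦ ?_, ?_⟩, fun j hj k hk h ↦ ?_, fun m hm m' hm' h ↦ ?_,
    fun j hj h ↦ ?_, fun m hm h ↦ ?_, fun j hj m hm h ↦ ?_, fun j hj hj' i ↦ ?_, fun i ↦ ?_,
    fun i ↦ ?_, fun j hj hj' i ↦ ?_⟩
  · obtain ⟨p, hp, rfl⟩ := exists_eq_typeDRep hn hD cs hw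
    obtain h | rfl | h : p < n ∨ p = n ∨ n < p := by omega
    · exact .inl ⟨p, by omega, (hdesc p (by omega)).symm⟩
    · exact .inr (.inl rfl)
    · refine .inr (.inr ⟨p - n - 1, by omega, ?_⟩)
      rw [dHookWord_eq_typeDRep]
      congr 1
      omega
  · rintro (⟨j, hj, rfl⟩ | rfl | ⟨m, hm, rfl⟩)
    · rw [hdesc j hj]
      exact (typeDRep_spec hn hD cs (by omega)).2.2
    · exact (typeDRep_spec hn hD cs (by omega)).2.2
    · rw [dHookWord_eq_typeDRep]
      exact (typeDRep_spec hn hD cs (by omega)).2.2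
  · rw [hdesc j hj, hdesc k hk] at h
    exact hinj (by omega) (by omega) h
  · rw [dHookWord_eq_typeDRep, dHookWord_eq_typeDRep] at h
    have := hinj (by omega) (by omega) h
    omega
  · rw [hdesc j hj] at h
    have := hinj (by omega) (by omega) h
    omega
  · rw [dHookWord_eq_typeDRep] at h
    have := hinj (by omega) (by omega) h
    omega
  · rw [hdesc j hj, dHookWord_eq_typeDRep] at h
    have := hinj (by omega) (by omega) h
    omega
  · rw [hdesc j hj', isLeftDescent_typeDRep_iff hn hD cs (by omega), hact]
    omega
  · rw [isLeftDescent_typeDRep_iff hn hD cs (by omega), hact]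
    omega
  · rw [dHookWord_eq_typeDRep, isLeftDescent_typeDRep_iff hn hD cs (by omega), hact]
    omega
  · rw [dHookWord_eq_typeDRep, isLeftDescent_typeDRep_iff hn hD cs (by omega), hact]
    omega
end

section
/- Let W be the Coxeter group of type F₄ with simple generators s₁, s₂, s₃, s₄, Coxeter matrix m(1,2) = 3, m(2,3) = 4, m(3,4) = 3, and m(i,j) = 2 for the remaining pairs i ≠ j, and length function ℓ. Write a word i₁i₂⋯iₘ for the product s_{i₁}s_{i₂}⋯s_{iₘ}. Then the set of elements w ∈ W having no right descent in {2, 3, 4} is exactly the 24 pairwise distinct elements given by the words: (empty word), 1, 21, 321, 4321, 2321, 24321, 12321, 324321, 124321, 2324321, 1324321, 12324321, 21324321, 212324321, 321324321, 3212324321, 4321324321, 23212324321, 14321324321, 423212324321, 3423212324321, 23423212324321, 123423212324321; and each of these words is reduced (its length equals its number of letters). -/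
/-- The list of the 24 words (in the simple generators, `0`-indexed: the
generator `sᵢ` of the paper is index `i - 1`) for the `⟨Sp(3)⟩`-positive Weyl
group of `F₄`: the words
`ε, 1, 21, 321, 4321, 2321, 24321, 12321, 324321, 124321, 2324321, 1324321,
12324321, 21324321, 212324321, 321324321, 3212324321, 4321324321, 23212324321,
14321324321, 423212324321, 3423212324321, 23423212324321, 123423212324321`. -/
def F4PositiveWords : List (List (Fin 4)) :=
  [[], [0], [1, 0],
  [2, 1, 0], [3, 2, 1, 0], [1, 2, 1, 0],
  [1, 3, 2, 1, 0], [0, 1, 2, 1, 0], [2, 1, 3, 2, 1, 0],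
  [0, 1, 3, 2, 1, 0], [1, 2, 1, 3, 2, 1, 0], [0, 2, 1, 3, 2, 1, 0],
  [0, 1, 2, 1, 3, 2, 1, 0], [1, 0, 2, 1, 3, 2, 1, 0], [1, 0, 1, 2, 1, 3, 2, 1, 0],
  [2, 1, 0, 2, 1, 3, 2, 1, 0], [2, 1, 0, 1, 2, 1, 3, 2, 1, 0],
  [3, 2, 1, 0, 2, 1, 3, 2, 1, 0], [1, 2, 1, 0, 1, 2, 1, 3, 2, 1, 0],
  [0, 3, 2, 1, 0, 2, 1, 3, 2, 1, 0], [3, 1, 2, 1, 0, 1, 2, 1, 3, 2, 1, 0],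
  [2, 3, 1, 2, 1, 0, 1, 2, 1, 3, 2, 1, 0],
  [1, 2, 3, 1, 2, 1, 0, 1, 2, 1, 3, 2, 1, 0],
  [0, 1, 2, 3, 1, 2, 1, 0, 1, 2, 1, 3, 2, 1, 0]]

namespace F4

/-- Rewrite rules on words in the generators of `F₄`: the braid relations oriented towards the
lexicographically smaller word, followed by four of their consequences. -/
def rules : List (List (Fin 4) × List (Fin 4)) :=
  [([2, 0], [0, 2]), ([3, 0], [0, 3]), ([3, 1], [1, 3]), ([1, 0, 1], [0, 1, 0]),
  ([3, 2, 3], [2, 3, 2]), ([2, 1, 2, 1], [1, 2, 1, 2]),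
  ([3, 2, 1, 3], [2, 3, 2, 1]), ([3, 2, 1, 0, 3], [2, 3, 2, 1, 0]),
  ([2, 1, 0, 2, 1, 0], [1, 2, 1, 0, 2, 1]),
  ([3, 2, 1, 0, 2, 1, 3, 2, 1, 0, 2], [2, 3, 2, 1, 0, 2, 1, 3, 2, 1, 0])]

/-- Apply, at the leftmost possible position, the first rule that matches there. -/
def rewriteOnce : List (Fin 4) → List (Fin 4)
  | [] => []
  | i :: ω =>
    match rules.find? fun ρ => ρ.1.isPrefixOf (i :: ω) with
    | some ρ => ρ.2 ++ (i :: ω).drop ρ.1.length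
    | none => i :: rewriteOnce ω

/-- Twenty rewriting steps, enough to compare the words `i :: ω` and `ω ++ [j]` for `ω` in
`F4PositiveWords`. -/
def normalize (ω : List (Fin 4)) : List (Fin 4) := rewriteOnce^[20] ω

/-- The action of the simple generators on the cosets of the parabolic subgroup generated by the
generators `1`, `2`, `3`; the coset of the `k`-th word of `F4PositiveWords` is labelled `k`. -/
def cosetAction : Fin 4 → Function.End (Fin 24) :=
  ![![1, 0, 2, 3, 4, 7, 9, 5, 11, 6, 12, 8, 10, 14, 13, 16, 15, 19, 18, 17, 20, 21, 23, 22],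
    ![0, 2, 1, 5, 6, 3, 4, 7, 10, 9, 8, 13, 14, 11, 12, 15, 18, 17, 16, 20, 19, 22, 21, 23],
    ![0, 1, 3, 2, 4, 5, 8, 7, 6, 11, 10, 9, 12, 15, 16, 13, 14, 17, 18, 19, 21, 20, 22, 23],
    ![0, 1, 2, 4, 3, 6, 5, 9, 8, 7, 10, 11, 12, 13, 14, 17, 19, 15, 20, 16, 18, 21, 22, 23]]

/-- The length of the minimal representative of a coset. -/
def cosetLevel (k : Fin 24) : ℕ := (F4PositiveWords[k]).length

theorem cosetLevel_cosetAction_le :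
    ∀ (i : Fin 4) (k : Fin 24), cosetLevel (cosetAction i k) ≤ cosetLevel k + 1 := by
  decide +kernel

theorem cosetAction_zero : ∀ i : Fin 4, i ≠ 0 → cosetAction i 0 = 0 := by
  decide

theorem foldr_cosetAction : ∀ k : Fin 24,
    (F4PositiveWords[k]).foldr (fun i => cosetAction i) 0 = k := by
  decide +kernel

/-- Multiplying a word of `F4PositiveWords` on the left by a generator gives, up to rewriting,
another word of the list or the same word followed by a generator other than `0`. -/
theorem normalize_cons_eq : ∀ ω ∈ F4PositiveWords, ∀ i : Fin 4,
    (∃ ω' ∈ F4PositiveWords, normalize (i :: ω) = normalize ω' ∨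
      normalize ω = normalize (i :: ω')) ∨
    ∃ j : Fin 4, j ≠ 0 ∧ normalize (i :: ω) = normalize (ω ++ [j]) := by
  decide +kernel

section CoxeterSystem

variable {W : Type*} [Group W] {M : CoxeterMatrix (Fin 4)}

theorem isLiftable_cosetAction
    (hM : M 0 1 = 3 ∧ M 1 2 = 4 ∧ M 2 3 = 3 ∧ M 0 2 = 2 ∧ M 0 3 = 2 ∧ M 1 3 = 2) :
    M.IsLiftable cosetAction := by
  obtain ⟨h01, h12, h23, h02, h03, h13⟩ := hM
  intro i j
  fin_cases i <;> fin_cases j <;>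
    simp only [Fin.zero_eta, Fin.mk_one, Fin.reduceFinMk, M.diagonal, h01, h12, h23, h02, h03, h13,
      M.symmetric 1 0, M.symmetric 2 0, M.symmetric 3 0, M.symmetric 2 1, M.symmetric 3 1,
      M.symmetric 3 2] <;>
    exact funext (by decide +kernel)

theorem wordProd_eq_of_mem_rules (cs : CoxeterSystem M W)
    (hM : M 0 1 = 3 ∧ M 1 2 = 4 ∧ M 2 3 = 3 ∧ M 0 2 = 2 ∧ M 0 3 = 2 ∧ M 1 3 = 2) :
    ∀ ρ ∈ rules, cs.wordProd ρ.1 = cs.wordProd ρ.2 := by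
  obtain ⟨h01, h12, h23, h02, h03, h13⟩ := hM
  have b01 := cs.wordProd_braidWord_eq 0 1
  have b12 := cs.wordProd_braidWord_eq 1 2
  have b23 := cs.wordProd_braidWord_eq 2 3
  have b02 := cs.wordProd_braidWord_eq 0 2
  have b03 := cs.wordProd_braidWord_eq 0 3
  have b13 := cs.wordProd_braidWord_eq 1 3
  simp only [CoxeterMatrix.symmetric M 1 0, CoxeterMatrix.symmetric M 2 1,
    CoxeterMatrix.symmetric M 3 2, CoxeterMatrix.symmetric M 2 0, CoxeterMatrix.symmetric M 3 0,
    CoxeterMatrix.symmetric M 3 1, CoxeterSystem.braidWord, h01, h12, h23, h02, h03, h13,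
    CoxeterSystem.alternatingWord, List.concat_eq_append, List.nil_append, List.cons_append,
    CoxeterSystem.wordProd_cons, CoxeterSystem.wordProd_nil, mul_one]
    at b01 b12 b23 b02 b03 b13
  simp only [rules, List.forall_mem_cons, CoxeterSystem.wordProd_cons,
    CoxeterSystem.wordProd_nil, mul_one]
  generalize cs.simple 0 = a at *
  generalize cs.simple 1 = b at *
  generalize cs.simple 2 = c at *
  generalize cs.simple 3 = d at *
  have c02 (x : W) : a * (c * x) = c * (a * x) := by simp only [← mul_assoc, b02]
  have c13 (x : W) : b * (d * x) = d * (b * x) := by simp only [← mul_assoc, b13]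
  have c23 (x : W) : c * (d * (c * x)) = d * (c * (d * x)) := by
    simpa only [mul_assoc] using congrArg (· * x) b23.symm
  have c12 (x : W) : b * (c * (b * (c * x))) = c * (b * (c * (b * x))) := by
    simpa only [mul_assoc] using congrArg (· * x) b12
  have dcba : d * (c * (b * (a * d))) = c * (d * (c * (b * a))) := by
    rw [b03, c13, ← c23]
  have dcba_mul (x : W) : d * (c * (b * (a * (d * x)))) = c * (d * (c * (b * (a * x)))) := by
    simpa only [mul_assoc] using congrArg (· * x) dcba
  refine ⟨b02.symm, b03.symm, b13.symm, b01, b23, b12.symm, ?_, dcba, ?_, ?_, by simp⟩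
  · rw [b13, ← c23]
  · rw [c02, ← b01, ← c12, ← c02]
  · rw [c13, b02, c12, c23, ← c13 (c * _), dcba_mul]

theorem wordProd_rewriteOnce (cs : CoxeterSystem M W)
    (hM : M 0 1 = 3 ∧ M 1 2 = 4 ∧ M 2 3 = 3 ∧ M 0 2 = 2 ∧ M 0 3 = 2 ∧ M 1 3 = 2)
    (ω : List (Fin 4)) : cs.wordProd (rewriteOnce ω) = cs.wordProd ω := by
  induction ω with
  | nil => rfl
  | cons i ω ih =>
    rw [rewriteOnce]
    split
    · next ρ h =>
      have hprefix : ρ.1.isPrefixOf (i :: ω) = true :=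
        List.find?_some (p := fun ρ : List (Fin 4) × List (Fin 4) => ρ.1.isPrefixOf (i :: ω)) h
      obtain ⟨τ, hτ⟩ := List.isPrefixOf_iff_prefix.mp hprefix
      rw [← hτ, List.drop_left, cs.wordProd_append, cs.wordProd_append,
        wordProd_eq_of_mem_rules cs hM ρ (List.mem_of_find?_eq_some h)]
    · rw [cs.wordProd_cons, cs.wordProd_cons, ih]

theorem wordProd_eq_of_normalize_eq (cs : CoxeterSystem M W)
    (hM : M 0 1 = 3 ∧ M 1 2 = 4 ∧ M 2 3 = 3 ∧ M 0 2 = 2 ∧ M 0 3 = 2 ∧ M 1 3 = 2)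
    {ω ω' : List (Fin 4)} (h : normalize ω = normalize ω') : cs.wordProd ω = cs.wordProd ω' := by
  have wordProd_iterate (n : ℕ) (τ : List (Fin 4)) :
      cs.wordProd (rewriteOnce^[n] τ) = cs.wordProd τ := by
    induction n generalizing τ with
    | zero => rfl
    | succ n ih => rw [Function.iterate_succ_apply, ih, wordProd_rewriteOnce cs hM]
  rw [← wordProd_iterate 20 ω, ← wordProd_iterate 20 ω']
  exact congrArg cs.wordProd h

/-- Left multiplication of the element of a word of `F4PositiveWords` by a simple generator. -/
theorem simple_mul_wordProd (cs : CoxeterSystem M W)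
    (hM : M 0 1 = 3 ∧ M 1 2 = 4 ∧ M 2 3 = 3 ∧ M 0 2 = 2 ∧ M 0 3 = 2 ∧ M 1 3 = 2)
    {ω : List (Fin 4)} (hω : ω ∈ F4PositiveWords) (i : Fin 4) :
    (∃ ω' ∈ F4PositiveWords, cs.simple i * cs.wordProd ω = cs.wordProd ω') ∨
    ∃ j : Fin 4, j ≠ 0 ∧ cs.simple i * cs.wordProd ω = cs.wordProd ω * cs.simple j := by
  rcases normalize_cons_eq ω hω i with ⟨ω', hω', h | h⟩ | ⟨j, hj, h⟩
  · exact .inl ⟨ω', hω', by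
      rw [← cs.wordProd_cons, wordProd_eq_of_normalize_eq cs hM h]⟩
  · exact .inl ⟨ω', hω', by
      rw [wordProd_eq_of_normalize_eq cs hM h, cs.wordProd_cons,
        cs.simple_mul_simple_cancel_left]⟩
  · exact .inr ⟨j, hj, by
      rw [← cs.wordProd_cons, wordProd_eq_of_normalize_eq cs hM h, cs.wordProd_append,
        cs.wordProd_singleton]⟩

/-- The action of `W` on cosets extending `cosetAction`. -/
noncomputable def cosetHom (cs : CoxeterSystem M W)
    (hM : M 0 1 = 3 ∧ M 1 2 = 4 ∧ M 2 3 = 3 ∧ M 0 2 = 2 ∧ M 0 3 = 2 ∧ M 1 3 = 2) :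
    W →* Function.End (Fin 24) :=
  cs.lift ⟨cosetAction, isLiftable_cosetAction hM⟩

theorem cosetHom_simple (cs : CoxeterSystem M W)
    (hM : M 0 1 = 3 ∧ M 1 2 = 4 ∧ M 2 3 = 3 ∧ M 0 2 = 2 ∧ M 0 3 = 2 ∧ M 1 3 = 2) (i : Fin 4) :
    cosetHom cs hM (cs.simple i) = cosetAction i :=
  cs.lift_apply_simple (isLiftable_cosetAction hM) i

theorem cosetHom_wordProd_apply (cs : CoxeterSystem M W)
    (hM : M 0 1 = 3 ∧ M 1 2 = 4 ∧ M 2 3 = 3 ∧ M 0 2 = 2 ∧ M 0 3 = 2 ∧ M 1 3 = 2)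
    (ω : List (Fin 4)) (k : Fin 24) :
    cosetHom cs hM (cs.wordProd ω) k = ω.foldr (fun i => cosetAction i) k := by
  induction ω with
  | nil => rw [cs.wordProd_nil, map_one]; rfl
  | cons i ω ih =>
    rw [cs.wordProd_cons, map_mul, cosetHom_simple]
    exact congrArg (cosetAction i) ih

theorem cosetLevel_cosetHom_le_length (cs : CoxeterSystem M W)
    (hM : M 0 1 = 3 ∧ M 1 2 = 4 ∧ M 2 3 = 3 ∧ M 0 2 = 2 ∧ M 0 3 = 2 ∧ M 1 3 = 2) (w : W) :
    cosetLevel (cosetHom cs hM w 0) ≤ cs.length w := by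
  obtain ⟨ω, hω, rfl⟩ := cs.exists_isReduced w
  rw [hω.eq, cosetHom_wordProd_apply]
  clear hω
  induction ω with
  | nil => exact le_rfl
  | cons i ω ih => exact (cosetLevel_cosetAction_le _ _).trans (Nat.succ_le_succ ih)

theorem cosetHom_wordProd_getElem (cs : CoxeterSystem M W)
    (hM : M 0 1 = 3 ∧ M 1 2 = 4 ∧ M 2 3 = 3 ∧ M 0 2 = 2 ∧ M 0 3 = 2 ∧ M 1 3 = 2) (k : Fin 24) :
    cosetHom cs hM (cs.wordProd F4PositiveWords[k]) 0 = k := by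
  rw [cosetHom_wordProd_apply, foldr_cosetAction]

theorem cosetLevel_cosetHom_wordProd (cs : CoxeterSystem M W)
    (hM : M 0 1 = 3 ∧ M 1 2 = 4 ∧ M 2 3 = 3 ∧ M 0 2 = 2 ∧ M 0 3 = 2 ∧ M 1 3 = 2)
    {ω : List (Fin 4)} (hω : ω ∈ F4PositiveWords) :
    cosetLevel (cosetHom cs hM (cs.wordProd ω) 0) = ω.length := by
  obtain ⟨k, hk, rfl⟩ := List.mem_iff_getElem.mp hω
  have := cosetHom_wordProd_getElem cs hM ⟨k, hk⟩
  simp only [Fin.getElem_fin] at this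
  rw [this, cosetLevel, Fin.getElem_fin]

/-- An element without right descents other than `0` is the product of a word of
`F4PositiveWords`. -/
theorem exists_mem_of_forall_not_isRightDescent (cs : CoxeterSystem M W)
    (hM : M 0 1 = 3 ∧ M 1 2 = 4 ∧ M 2 3 = 3 ∧ M 0 2 = 2 ∧ M 0 3 = 2 ∧ M 1 3 = 2)
    (ω : List (Fin 4)) (hω : cs.IsReduced ω)
    (h : ∀ i : Fin 4, i ≠ 0 → ¬ cs.IsRightDescent (cs.wordProd ω) i) :
    ∃ ω' ∈ F4PositiveWords, cs.wordProd ω = cs.wordProd ω' := by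
  induction ω with
  | nil => exact ⟨[], by decide, rfl⟩
  | cons i ω ih =>
    have hred : cs.IsReduced ω := hω.drop 1
    have hlen : cs.length (cs.wordProd (i :: ω)) = cs.length (cs.wordProd ω) + 1 := by
      rw [hω.eq, hred.eq, List.length_cons]
    obtain ⟨τ, hτ, heq⟩ := ih hred fun j hj hdesc => h j hj <| by
      have hle := cs.length_mul_le (cs.simple i) (cs.wordProd ω * cs.simple j)
      rw [cs.length_simple, ← mul_assoc, ← cs.wordProd_cons] at hle
      unfold CoxeterSystem.IsRightDescent at hdesc ⊢
      lia
    rw [cs.wordProd_cons] at h hlen ⊢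
    rw [heq] at h hlen ⊢
    rcases simple_mul_wordProd cs hM hτ i with hmem | ⟨j, hj, hmul⟩
    · exact hmem
    · refine absurd ?_ (h j hj)
      rw [CoxeterSystem.IsRightDescent, hlen, hmul, cs.simple_mul_simple_cancel_right]
      exact Nat.lt_succ_self _

end CoxeterSystem

end F4

/-- The `{2,3,4}`-positive elements of the Coxeter group of type `F₄`: the set
of `w` with no right descent in `{2,3,4}` is exactly the 24 pairwise distinct
elements given by the words of `F4PositiveWords`, and each of these words is
reduced.  Here the simple generator `sᵢ` (`1 ≤ i ≤ 4`) is `cs.simple (i - 1)`,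
with Coxeter matrix `m(1,2) = 3`, `m(2,3) = 4`, `m(3,4) = 3` and all other
off-diagonal entries `2`. -/
theorem F4_positive_weyl_group
    {W : Type*} [Group W]
    (M : CoxeterMatrix (Fin 4))
    (hM : M 0 1 = 3 ∧ M 1 2 = 4 ∧ M 2 3 = 3 ∧ M 0 2 = 2 ∧ M 0 3 = 2 ∧ M 1 3 = 2)
    (cs : CoxeterSystem M W) :
    ({w : W | ∀ i : Fin 4, i ≠ 0 → ¬ cs.IsRightDescent w i}
        = {w : W | ∃ ω ∈ F4PositiveWords, w = cs.wordProd ω}) ∧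
    (F4PositiveWords.map cs.wordProd).Nodup ∧
    (∀ ω ∈ F4PositiveWords, cs.length (cs.wordProd ω) = ω.length) := by
  have length_eq (ω) (hω : ω ∈ F4PositiveWords) : cs.length (cs.wordProd ω) = ω.length :=
    (cs.length_wordProd_le ω).antisymm <|
      (F4.cosetLevel_cosetHom_wordProd cs hM hω).symm.trans_le
        (F4.cosetLevel_cosetHom_le_length cs hM _)
  refine ⟨Set.ext fun w => ⟨fun h => ?_, ?_⟩, ?_, length_eq⟩
  · obtain ⟨ω, hω, rfl⟩ := cs.exists_isReduced w
    exact F4.exists_mem_of_forall_not_isRightDescent cs hM ω hω h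
  · rintro ⟨ω, hω, rfl⟩ j hj
    have hle := F4.cosetLevel_cosetHom_le_length cs hM (cs.wordProd ω * cs.simple j)
    have hfix : F4.cosetHom cs hM (cs.wordProd ω * cs.simple j) 0 =
        F4.cosetHom cs hM (cs.wordProd ω) 0 := by
      rw [map_mul, F4.cosetHom_simple]
      exact congrArg _ (F4.cosetAction_zero j hj)
    rw [hfix, F4.cosetLevel_cosetHom_wordProd cs hM hω, ← length_eq ω hω] at hle
    exact hle.not_gt
  · refine List.Nodup.map_on (fun ω hω ω' hω' heq => ?_) (by decide +kernel)
    obtain ⟨k, hk, rfl⟩ := List.mem_iff_getElem.mp hω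
    obtain ⟨k', hk', rfl⟩ := List.mem_iff_getElem.mp hω'
    have hkk' : (⟨k, hk⟩ : Fin 24) = ⟨k', hk'⟩ :=
      (F4.cosetHom_wordProd_getElem cs hM ⟨k, hk⟩).symm.trans <|
        (congrArg (fun w => F4.cosetHom cs hM w 0) heq).trans <|
          F4.cosetHom_wordProd_getElem cs hM ⟨k', hk'⟩
    cases hkk'
    rfl
end

section
/- Let W be the Coxeter group of type E₆ with simple generators s₁, …, s₆ in the Bourbaki labeling: m(i,j) = 3 exactly for the pairs {1,3}, {3,4}, {4,5}, {5,6}, {2,4}, and m(i,j) = 2 for all other pairs i ≠ j; let ℓ be the length function. Write a word i₁i₂⋯iₘ for the product s_{i₁}s_{i₂}⋯s_{iₘ}. Then the set of elements w ∈ W having no right descent in {2, 3, 4, 5, 6} is exactly the 27 pairwise distinct elements given by the words: (empty word), 1, 31, 431, 2431, 5431, 52431, 65431, 452431, 265431, 3452431, 4265431, 13452431, 63452431, 54265431, 613452431, 354265431, 5613452431, 4354265431, 45613452431, 24354265431, 345613452431, 124354265431, 2345613452431, 42345613452431, 542345613452431, 6542345613452431; each of these words is reduced, and in particular the unique element of maximal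 length in this set has length 16. -/
/-- The list of the 27 words (in the simple generators, `0`-indexed: the
generator `sᵢ` of the paper, Bourbaki labeling, is index `i - 1`) for the
`Z_e`-positive Weyl group of `E₆`: the words
`ε, 1, 31, 431, 2431, 5431, 52431, 65431, 452431, 265431, 3452431, 4265431,
13452431, 63452431, 54265431, 613452431, 354265431, 5613452431, 4354265431,
45613452431, 24354265431, 345613452431, 124354265431, 2345613452431,
42345613452431, 542345613452431, 6542345613452431`. -/
def E6PositiveWords : List (List (Fin 6)) :=
  [[], [0],
  [2, 0], [3, 2, 0],
  [1, 3, 2, 0], [4, 3, 2, 0],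
  [4, 1, 3, 2, 0], [5, 4, 3, 2, 0],
  [3, 4, 1, 3, 2, 0], [1, 5, 4, 3, 2, 0],
  [2, 3, 4, 1, 3, 2, 0], [3, 1, 5, 4, 3, 2, 0],
  [0, 2, 3, 4, 1, 3, 2, 0], [5, 2, 3, 4, 1, 3, 2, 0],
  [4, 3, 1, 5, 4, 3, 2, 0], [5, 0, 2, 3, 4, 1, 3, 2, 0],
  [2, 4, 3, 1, 5, 4, 3, 2, 0], [4, 5, 0, 2, 3, 4, 1, 3, 2, 0],
  [3, 2, 4, 3, 1, 5, 4, 3, 2, 0], [3, 4, 5, 0, 2, 3, 4, 1, 3, 2, 0],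
  [1, 3, 2, 4, 3, 1, 5, 4, 3, 2, 0], [2, 3, 4, 5, 0, 2, 3, 4, 1, 3, 2, 0],
  [0, 1, 3, 2, 4, 3, 1, 5, 4, 3, 2, 0], [1, 2, 3, 4, 5, 0, 2, 3, 4, 1, 3, 2, 0],
  [3, 1, 2, 3, 4, 5, 0, 2, 3, 4, 1, 3, 2, 0],
  [4, 3, 1, 2, 3, 4, 5, 0, 2, 3, 4, 1, 3, 2, 0],
  [5, 4, 3, 1, 2, 3, 4, 5, 0, 2, 3, 4, 1, 3, 2, 0]]

/-- Adjacency in the Dynkin diagram of type `E₆` (Bourbaki labeling, `0`-indexed). -/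
abbrev E6Adj (i j : Fin 6) : Prop :=
  ({i, j} : Finset (Fin 6)) ∈
    ({{0, 2}, {2, 3}, {3, 4}, {4, 5}, {1, 3}} : Finset (Finset (Fin 6)))

/-- The word at position `k` of `E6PositiveWords`. -/
def E6Word (k : Fin 27) : List (Fin 6) :=
  E6PositiveWords[k]

/-- The action of the simple reflections on the `27` weights of the minuscule representation with
highest weight `ϖ₁`; the weight `k` is the image of `ϖ₁` under the word `E6Word k`. -/
def E6Act (i : Fin 6) : Fin 27 → Fin 27 :=
  ![![1, 0, 2, 3, 4, 5, 6, 7, 8, 9, 12, 11, 10, 15, 14, 13, 17, 16, 19, 18, 22, 21, 20, 23, 24,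
      25, 26],
    ![0, 1, 2, 4, 3, 6, 5, 9, 8, 7, 10, 11, 12, 13, 14, 15, 16, 17, 20, 22, 18, 23, 19, 21, 24,
      25, 26],
    ![0, 2, 1, 3, 4, 5, 6, 7, 10, 9, 8, 13, 12, 11, 16, 15, 14, 17, 18, 21, 20, 19, 23, 22, 24,
      25, 26],
    ![0, 1, 3, 2, 4, 5, 8, 7, 6, 11, 10, 9, 12, 13, 14, 15, 18, 19, 16, 17, 20, 21, 22, 24, 23,
      25, 26],
    ![0, 1, 2, 5, 6, 3, 4, 7, 8, 9, 10, 14, 12, 16, 11, 17, 13, 15, 18, 19, 20, 21, 22, 23, 25,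
      24, 26],
    ![0, 1, 2, 3, 4, 7, 9, 5, 11, 6, 13, 8, 15, 10, 14, 12, 16, 17, 18, 19, 20, 21, 22, 23, 24,
      26, 25]] i

lemma E6Act_involutive (i : Fin 6) (k : Fin 27) : E6Act i (E6Act i k) = k := by
  decide +revert +kernel

lemma E6Act_comm (i j : Fin 6) (h : ¬ E6Adj i j) (k : Fin 27) :
    E6Act i (E6Act j k) = E6Act j (E6Act i k) := by
  decide +revert +kernel

lemma E6Act_braid (i j : Fin 6) (h : E6Adj i j) (k : Fin 27) :
    E6Act i (E6Act j (E6Act i k)) = E6Act j (E6Act i (E6Act j k)) := by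
  decide +revert +kernel

lemma E6Act_zero_eq_zero_iff (i : Fin 6) : E6Act i 0 = 0 ↔ i ≠ 0 := by
  decide +revert +kernel

lemma exists_E6Word_eq_cons (k : Fin 27) (hk : k ≠ 0) :
    ∃ a, E6Act a k < k ∧ E6Word k = a :: E6Word (E6Act a k) := by
  decide +revert +kernel

lemma E6Act_of_lt_of_lt (k : Fin 27) (a i : Fin 6) (hia : i ≠ a) (ha : E6Act a k < k)
    (hi : E6Act i k < k) :
    ¬ E6Adj i a ∧ E6Act i (E6Act a k) < E6Act a k ∧ E6Act a (E6Act i k) < E6Act i k := by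
  decide +revert +kernel

lemma E6Act_of_lt_of_adj (k : Fin 27) (a i : Fin 6) (ha : E6Act a k < k) (hi : E6Act i k = k)
    (h : E6Adj i a) :
    E6Act i (E6Act a k) < E6Act a k ∧
      E6Act a (E6Act i (E6Act a k)) = E6Act i (E6Act a k) := by
  decide +revert +kernel

lemma length_E6Word_E6Act_le (i : Fin 6) (k : Fin 27) :
    (E6Word (E6Act i k)).length ≤ (E6Word k).length + 1 := by
  decide +revert +kernel

lemma foldr_E6Act_E6Word (k : Fin 27) : (E6Word k).foldr E6Act 0 = k := by
  decide +revert +kernel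

lemma length_E6Word_le (k : Fin 27) : (E6Word k).length ≤ 16 := by
  decide +revert +kernel

lemma eq_of_length_E6Word (k : Fin 27) (h : (E6Word k).length = 16) : k = 26 := by
  decide +revert +kernel

lemma E6PositiveWords_eq_map : E6PositiveWords = (List.finRange 27).map E6Word := by
  decide +kernel

lemma mem_E6PositiveWords {ω : List (Fin 6)} : ω ∈ E6PositiveWords ↔ ∃ k, E6Word k = ω := by
  simp [E6PositiveWords_eq_map]

lemma length_E6Word_foldr_le (ω : List (Fin 6)) :
    (E6Word (ω.foldr E6Act 0)).length ≤ ω.length := by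
  induction ω with
  | nil => rfl
  | cons i ω ih =>
    exact (length_E6Word_E6Act_le i _).trans (Nat.add_le_add_right ih 1)

section CoxeterSystem

variable {W : Type*} [Group W] {M : CoxeterMatrix (Fin 6)}
  (cs : CoxeterSystem M W)

lemma simple_comm_of_not_E6Adj (hM : ∀ i j : Fin 6, i ≠ j → M i j = if E6Adj i j then 3 else 2)
    {i j : Fin 6} (hij : i ≠ j) (h : ¬ E6Adj i j) :
    cs.simple i * cs.simple j = cs.simple j * cs.simple i := by
  have hp := cs.simple_mul_simple_pow i j
  rw [hM i j hij, if_neg h, sq, mul_eq_one_iff_eq_inv] at hp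
  simpa using hp

lemma simple_braid_of_E6Adj (hM : ∀ i j : Fin 6, i ≠ j → M i j = if E6Adj i j then 3 else 2)
    {i j : Fin 6} (hij : i ≠ j) (h : E6Adj i j) :
    cs.simple i * cs.simple j * cs.simple i = cs.simple j * cs.simple i * cs.simple j := by
  have hp := cs.simple_mul_simple_pow i j
  rw [hM i j hij, if_pos h, pow_succ, sq, ← mul_assoc, ← mul_assoc,
    mul_assoc _ (cs.simple j) (cs.simple i), mul_assoc _ _ (cs.simple j),
    mul_eq_one_iff_eq_inv] at hp
  simpa [mul_assoc] using hp

lemma isLiftable_E6Act (hM : ∀ i j : Fin 6, i ≠ j → M i j = if E6Adj i j then 3 else 2) :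
    M.IsLiftable (G := Function.End (Fin 27)) E6Act := by
  intro i j
  funext k
  rcases eq_or_ne i j with rfl | hij
  · rw [M.diagonal, pow_one]
    exact E6Act_involutive i k
  rw [hM i j hij]
  split_ifs with h
  · change E6Act i (E6Act j (E6Act i (E6Act j (E6Act i (E6Act j k))))) = k
    rw [E6Act_braid i j h, E6Act_involutive, E6Act_involutive, E6Act_involutive]
  · change E6Act i (E6Act j (E6Act i (E6Act j k))) = k
    rw [E6Act_comm i j h, E6Act_involutive, E6Act_involutive]

/-- The value at `cs.wordProd ω` of the action on the `27` minuscule weights. -/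
lemma lift_E6Act_wordProd (hf : M.IsLiftable (G := Function.End (Fin 27)) E6Act)
    (ω : List (Fin 6)) :
    cs.lift (G := Function.End (Fin 27)) ⟨E6Act, hf⟩ (cs.wordProd ω) 0 = ω.foldr E6Act 0 := by
  induction ω with
  | nil => rw [cs.wordProd_nil, map_one]; rfl
  | cons i ω ih =>
    rw [cs.wordProd_cons, map_mul, cs.lift_apply_simple hf]
    exact congrArg (E6Act i) ih

lemma foldr_E6Act_eq_of_wordProd_eq
    (hM : ∀ i j : Fin 6, i ≠ j → M i j = if E6Adj i j then 3 else 2) {ω ω' : List (Fin 6)}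
    (h : cs.wordProd ω = cs.wordProd ω') : ω.foldr E6Act 0 = ω'.foldr E6Act 0 := by
  rw [← lift_E6Act_wordProd cs (isLiftable_E6Act hM), h, lift_E6Act_wordProd]

lemma length_E6Word_foldr_le_length
    (hM : ∀ i j : Fin 6, i ≠ j → M i j = if E6Adj i j then 3 else 2) (ω : List (Fin 6)) :
    (E6Word (ω.foldr E6Act 0)).length ≤ cs.length (cs.wordProd ω) := by
  obtain ⟨ω', hred, h⟩ := cs.exists_isReduced (cs.wordProd ω)
  rw [foldr_E6Act_eq_of_wordProd_eq cs hM h, h, hred.eq]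
  exact length_E6Word_foldr_le ω'

lemma length_wordProd_E6Word
    (hM : ∀ i j : Fin 6, i ≠ j → M i j = if E6Adj i j then 3 else 2) (k : Fin 27) :
    cs.length (cs.wordProd (E6Word k)) = (E6Word k).length := by
  refine le_antisymm (cs.length_wordProd_le _) ?_
  simpa only [foldr_E6Act_E6Word] using length_E6Word_foldr_le_length cs hM (E6Word k)

lemma wordProd_E6Word_injective
    (hM : ∀ i j : Fin 6, i ≠ j → M i j = if E6Adj i j then 3 else 2) :
    Function.Injective fun k => cs.wordProd (E6Word k) := fun k l h => by
  simpa only [foldr_E6Act_E6Word] using foldr_E6Act_eq_of_wordProd_eq cs hM h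

lemma not_isRightDescent_wordProd_E6Word
    (hM : ∀ i j : Fin 6, i ≠ j → M i j = if E6Adj i j then 3 else 2) (k : Fin 27)
    {j : Fin 6} (hj : j ≠ 0) : ¬ cs.IsRightDescent (cs.wordProd (E6Word k)) j := by
  have h := length_E6Word_foldr_le_length cs hM (E6Word k ++ [j])
  rw [List.foldr_append, List.foldr_cons, List.foldr_nil, (E6Act_zero_eq_zero_iff j).2 hj,
    foldr_E6Act_E6Word, cs.wordProd_append, cs.wordProd_singleton] at h
  rw [CoxeterSystem.IsRightDescent, length_wordProd_E6Word cs hM]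
  exact h.not_gt

/-- Left multiplication by a simple reflection either fixes the coset of `E6Word k`, and then acts
from the right by a simple reflection of the parabolic subgroup, or moves down an edge of the
weight diagram. -/
lemma simple_mul_wordProd_E6Word_aux
    (hM : ∀ i j : Fin 6, i ≠ j → M i j = if E6Adj i j then 3 else 2) (k : Fin 27) :
    (∀ i, E6Act i k = k → ∃ j ≠ 0, cs.simple i * cs.wordProd (E6Word k) =
      cs.wordProd (E6Word k) * cs.simple j) ∧
    (∀ i, E6Act i k < k → cs.simple i * cs.wordProd (E6Word (E6Act i k)) =
      cs.wordProd (E6Word k)) := by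
  induction k using WellFoundedLT.induction with
  | ind k ih =>
  rcases eq_or_ne k 0 with rfl | hk
  · refine ⟨fun i hi => ⟨i, (E6Act_zero_eq_zero_iff i).1 hi, ?_⟩,
      fun i hi => absurd hi (Fin.not_lt_zero _)⟩
    simp [E6Word, E6PositiveWords]
  obtain ⟨a, hak, hword⟩ := exists_E6Word_eq_cons k hk
  have hπ : cs.wordProd (E6Word k) = cs.simple a * cs.wordProd (E6Word (E6Act a k)) := by
    rw [hword, cs.wordProd_cons]
  obtain ⟨hfix, hdown⟩ := ih _ hak
  refine ⟨fun i hi => ?_, fun i hi => ?_⟩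
  · have hia : i ≠ a := by rintro rfl; exact hak.ne hi
    by_cases hadj : E6Adj i a
    · obtain ⟨hlt, hm⟩ := E6Act_of_lt_of_adj k a i hak hi hadj
      obtain ⟨j, hj, hcomm⟩ := (ih _ (hlt.trans hak)).1 a hm
      refine ⟨j, hj, ?_⟩
      have hl := hdown i hlt
      rw [hπ, ← hl, ← mul_assoc, ← mul_assoc, simple_braid_of_E6Adj cs hM hia hadj, mul_assoc,
        hcomm]
      simp only [mul_assoc]
    · obtain ⟨j, hj, hcomm⟩ := hfix i (by rw [E6Act_comm i a hadj, hi])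
      refine ⟨j, hj, ?_⟩
      rw [hπ, ← mul_assoc, simple_comm_of_not_E6Adj cs hM hia hadj, mul_assoc, hcomm, mul_assoc]
  · rcases eq_or_ne i a with rfl | hia
    · exact hπ.symm
    obtain ⟨hadj, hl, hm⟩ := E6Act_of_lt_of_lt k a i hia hak hi
    rw [hπ, ← hdown i hl, ← (ih _ hi).2 a hm, E6Act_comm i a hadj, ← mul_assoc, ← mul_assoc,
      simple_comm_of_not_E6Adj cs hM hia hadj]

lemma simple_mul_wordProd_E6Word
    (hM : ∀ i j : Fin 6, i ≠ j → M i j = if E6Adj i j then 3 else 2) (i : Fin 6) (k : Fin 27) :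
    (∃ j ≠ 0, cs.simple i * cs.wordProd (E6Word k) = cs.wordProd (E6Word k) * cs.simple j) ∨
      cs.simple i * cs.wordProd (E6Word k) = cs.wordProd (E6Word (E6Act i k)) := by
  rcases lt_trichotomy (E6Act i k) k with h | h | h
  · right
    rw [← (simple_mul_wordProd_E6Word_aux cs hM k).2 i h, cs.simple_mul_simple_cancel_left]
  · exact .inl ((simple_mul_wordProd_E6Word_aux cs hM k).1 i h)
  · right
    have hup := (simple_mul_wordProd_E6Word_aux cs hM (E6Act i k)).2 i
    rw [E6Act_involutive] at hup
    exact hup h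

/-- Factorization of a word into a coset representative and a word in the parabolic subgroup,
without increasing the number of letters. -/
lemma exists_wordProd_eq_E6Word_mul
    (hM : ∀ i j : Fin 6, i ≠ j → M i j = if E6Adj i j then 3 else 2) (ω : List (Fin 6)) :
    ∃ (k : Fin 27) (v : List (Fin 6)), (∀ j ∈ v, j ≠ 0) ∧
      cs.wordProd ω = cs.wordProd (E6Word k) * cs.wordProd v ∧
      (E6Word k).length + v.length ≤ ω.length := by
  induction ω with
  | nil => exact ⟨0, [], by simp [E6Word, E6PositiveWords]⟩
  | cons i ω ih =>
    obtain ⟨k, v, hv, hω, hlen⟩ := ih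
    rw [cs.wordProd_cons, hω, ← mul_assoc]
    rcases simple_mul_wordProd_E6Word cs hM i k with ⟨j, hj, h⟩ | h
    · refine ⟨k, j :: v, List.forall_mem_cons.2 ⟨hj, hv⟩, ?_, ?_⟩
      · rw [h, cs.wordProd_cons, mul_assoc]
      · simp only [List.length_cons]
        lia
    · refine ⟨E6Act i k, v, hv, by rw [h], ?_⟩
      have := length_E6Word_E6Act_le i k
      simp only [List.length_cons]
      lia

lemma exists_eq_wordProd_E6Word
    (hM : ∀ i j : Fin 6, i ≠ j → M i j = if E6Adj i j then 3 else 2) {w : W}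
    (hw : ∀ i : Fin 6, i ≠ 0 → ¬ cs.IsRightDescent w i) :
    ∃ k, w = cs.wordProd (E6Word k) := by
  obtain ⟨ω, hred, rfl⟩ := cs.exists_isReduced w
  obtain ⟨k, v, hv, hω, hlen⟩ := exists_wordProd_eq_E6Word_mul cs hM ω
  rcases v.eq_nil_or_concat with rfl | ⟨v, j, rfl⟩
  · exact ⟨k, by simpa using hω⟩
  refine absurd ?_ (hw j (hv j (by simp)))
  have hle := cs.length_wordProd_le (E6Word k ++ v)
  rw [cs.wordProd_append] at hle
  rw [CoxeterSystem.IsRightDescent, hred.eq, hω, List.concat_eq_append, cs.wordProd_append,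
    cs.wordProd_singleton, ← mul_assoc, cs.simple_mul_simple_cancel_right]
  simp only [List.concat_eq_append, List.length_append, List.length_singleton] at hlen hle
  lia

end CoxeterSystem

/-- The `{2,…,6}`-positive elements of the Coxeter group of type `E₆` (Bourbaki
labeling): the set of `w` with no right descent in `{2,3,4,5,6}` is exactly the
27 pairwise distinct elements given by the words of `E6PositiveWords`; each of
these words is reduced, and the unique element of maximal length in this set
has length 16.  Here the simple generator `sᵢ` (`1 ≤ i ≤ 6`) is
`cs.simple (i - 1)`, with Coxeter matrix entries `3` exactly on the (0-indexed)
pairs `{0,2}, {2,3}, {3,4}, {4,5}, {1,3}` and `2` on the remaining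
off-diagonal pairs. -/
theorem E6_positive_weyl_group
    {W : Type*} [Group W]
    (M : CoxeterMatrix (Fin 6))
    (hM : ∀ i j : Fin 6, i ≠ j →
      M i j = if ({i, j} : Finset (Fin 6)) ∈
          ({{0, 2}, {2, 3}, {3, 4}, {4, 5}, {1, 3}} : Finset (Finset (Fin 6)))
        then 3 else 2)
    (cs : CoxeterSystem M W) :
    ({w : W | ∀ i : Fin 6, i ≠ 0 → ¬ cs.IsRightDescent w i}
        = {w : W | ∃ ω ∈ E6PositiveWords, w = cs.wordProd ω}) ∧
    (E6PositiveWords.map cs.wordProd).Nodup ∧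
    (∀ ω ∈ E6PositiveWords, cs.length (cs.wordProd ω) = ω.length) ∧
    (∀ w : W, (∀ i : Fin 6, i ≠ 0 → ¬ cs.IsRightDescent w i) → cs.length w ≤ 16) ∧
    (∃! w : W, (∀ i : Fin 6, i ≠ 0 → ¬ cs.IsRightDescent w i) ∧ cs.length w = 16) := by
  have hmem (w : W) : (∀ i : Fin 6, i ≠ 0 → ¬ cs.IsRightDescent w i) ↔
      ∃ k, w = cs.wordProd (E6Word k) := by
    refine ⟨exists_eq_wordProd_E6Word cs hM, ?_⟩
    rintro ⟨k, rfl⟩ i hi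
    exact not_isRightDescent_wordProd_E6Word cs hM k hi
  refine ⟨?_, ?_, ?_, ?_, ?_⟩
  · ext w
    simp [hmem, mem_E6PositiveWords]
  · rw [E6PositiveWords_eq_map, List.map_map]
    exact (List.nodup_finRange 27).map (wordProd_E6Word_injective cs hM)
  · intro ω hω
    obtain ⟨k, rfl⟩ := mem_E6PositiveWords.1 hω
    exact length_wordProd_E6Word cs hM k
  · intro w hw
    obtain ⟨k, rfl⟩ := (hmem w).1 hw
    exact (length_wordProd_E6Word cs hM k).trans_le (length_E6Word_le k)
  · refine ⟨cs.wordProd (E6Word 26), ⟨(hmem _).2 ⟨26, rfl⟩, length_wordProd_E6Word cs hM 26⟩, ?_⟩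
    rintro w ⟨hw, hlen⟩
    obtain ⟨k, rfl⟩ := (hmem w).1 hw
    rw [length_wordProd_E6Word cs hM k] at hlen
    rw [eq_of_length_E6Word k hlen]
end
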